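/- arXiv:math/0112086 — 13 statements merged into one kernel-verified Lean document; each statement's English description precedes it below -/
import Mathlib

section
/- Let d and r be positive integers and let S be a set of positive integers with S ⊆ {1,…,d}. Suppose that at least one r-tiling sequence with tiles in S exists. Then there is a bijection between K̃(r,S) and the set {k ∈ K_r : s(k) = s̃(r,S) and k_ℓ = k_{ℓ+1} for every ℓ ∈ {1,…,d} with ℓ ∉ S} (with the convention k_{d+1} := 0). -/
open scoped BigOperators

/-- `s(n)`: the number of 1's in the binary expansion of `n`. -/
def binDigitSum (n : ℕ) : ℕ := (Nat.digits 2 n).sum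

/-- An `r`-tiling sequence with tiles in `S`, recorded as a list of pairs `(b_i, ℓ_i)`:
each `ℓ_i ∈ S`, the `b_i` are weakly increasing, `ℓ_i > ℓ_{i+1}` whenever `b_i = b_{i+1}`,
and `∑ ℓ_i·2^{b_i} = r`. -/
def IsTiling (S : Finset ℕ) (r : ℕ) (L : List (ℕ × ℕ)) : Prop :=
  (∀ p ∈ L, p.2 ∈ S) ∧
  L.Chain' (fun p q => p.1 ≤ q.1 ∧ (p.1 = q.1 → q.2 < p.2)) ∧
  (L.map fun p => p.2 * 2 ^ p.1).sum = r

/-- `s̃(r,S)`: the minimal length of an `r`-tiling sequence (`⊤` if none exists). -/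
noncomputable def stilde (S : Finset ℕ) (r : ℕ) : ℕ∞ :=
  sInf {n : ℕ∞ | ∃ L : List (ℕ × ℕ), IsTiling S r L ∧ (L.length : ℕ∞) = n}

/-- `K̃(r,S)`: the set of `r`-tiling sequences of minimal length. -/
def Ktilde (S : Finset ℕ) (r : ℕ) : Set (List (ℕ × ℕ)) :=
  {L | IsTiling S r L ∧ (L.length : ℕ∞) = stilde S r}

/-- `K_r`: weakly decreasing `d`-tuples of nonnegative integers summing to `r`. -/
def Kset (d r : ℕ) : Set (Fin d → ℕ) := {k | Antitone k ∧ ∑ i, k i = r}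

/-- The entry following `k i`, with the convention `k_{d+1} = 0`. -/
def nextEntry {d : ℕ} (k : Fin d → ℕ) (i : Fin d) : ℕ :=
  if h : (i : ℕ) + 1 < d then k ⟨(i : ℕ) + 1, h⟩ else 0

/-- `s(k) = s(k_1−k_2)+s(k_2−k_3)+⋯+s(k_{d−1}−k_d)+s(k_d)`. -/
def sBox {d : ℕ} (k : Fin d → ℕ) : ℕ := ∑ i, binDigitSum (k i - nextEntry k i)

theorem binDigitSum_eq_card_bitIndices (n : ℕ) :
    binDigitSum n = n.bitIndices.toFinset.card := by
  rw [List.toFinset_card_of_nodup Nat.bitIndices_nodup]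
  unfold binDigitSum
  induction n using Nat.strong_induction_on with
  | _ n ih =>
    rcases Nat.eq_zero_or_pos n with rfl | hn
    · simp
    · rw [Nat.digits_def' one_lt_two hn, List.sum_cons, ih (n / 2) (by omega)]
      rcases Nat.mod_two_eq_zero_or_one n with h | h
      · conv_rhs => rw [show n = 2 * (n / 2) by omega, Nat.bitIndices_two_mul]
        simp [h]
      · conv_rhs => rw [show n = 2 * (n / 2) + 1 by omega, Nat.bitIndices_two_mul_add_one]
        simp [h, add_comm]

/-- The weak order on tiles `(b, ℓ)`: increasing in `b`, then decreasing in `ℓ`. -/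
def TileLE (p q : ℕ × ℕ) : Prop := p.1 ≤ q.1 ∧ (p.1 = q.1 → q.2 ≤ p.2)

/-- The strict order on tiles `(b, ℓ)`: increasing in `b`, then decreasing in `ℓ`. -/
def TileLT (p q : ℕ × ℕ) : Prop := p.1 ≤ q.1 ∧ (p.1 = q.1 → q.2 < p.2)

instance : DecidableRel TileLE := fun _ _ => inferInstanceAs (Decidable (_ ∧ _))

instance : IsTrans (ℕ × ℕ) TileLE :=
  ⟨fun a b c h h' => by unfold TileLE at *; omega⟩

instance : Std.Antisymm TileLE :=
  ⟨fun a b h h' => by unfold TileLE at *; ext <;> omega⟩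

instance : Std.Total TileLE :=
  ⟨fun a b => by unfold TileLE; omega⟩

instance : IsTrans (ℕ × ℕ) TileLT :=
  ⟨fun a b c h h' => by unfold TileLT at *; omega⟩

theorem tileLT_iff (p q : ℕ × ℕ) : TileLT p q ↔ TileLE p q ∧ p ≠ q := by
  rw [Ne, Prod.ext_iff]
  unfold TileLT TileLE
  omega

theorem isChain_tileLT_iff (L : List (ℕ × ℕ)) :
    L.IsChain TileLT ↔ L.Pairwise TileLE ∧ L.Nodup := by
  rw [List.isChain_iff_pairwise, List.Nodup, ← List.pairwise_and_iff]
  exact List.Pairwise.iff tileLT_iff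

/-- Tilings, as sorted lists of `c` tiles, correspond to finite sets of `c` tiles. -/
def tilingEquivFinset (S : Finset ℕ) (r : ℕ) (c : ℕ∞) :
    {L : List (ℕ × ℕ) // IsTiling S r L ∧ (L.length : ℕ∞) = c} ≃
      {T : Finset (ℕ × ℕ) // (∀ p ∈ T, p.2 ∈ S) ∧ ∑ p ∈ T, p.2 * 2 ^ p.1 = r ∧
        (T.card : ℕ∞) = c} where
  toFun L := ⟨L.1.toFinset, by
    obtain ⟨L, ⟨hS, hc, hsum⟩, hlen⟩ := L
    have hnd := ((isChain_tileLT_iff L).1 hc).2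
    refine ⟨by simpa using hS, ?_, ?_⟩
    · rw [List.sum_toFinset _ hnd, hsum]
    · rw [List.toFinset_card_of_nodup hnd, hlen]⟩
  invFun T := ⟨T.1.sort TileLE, by
    obtain ⟨T, hS, hsum, hcard⟩ := T
    refine ⟨⟨by simpa using hS, ?_, ?_⟩, by simpa using hcard⟩
    · exact (isChain_tileLT_iff _).2 ⟨T.pairwise_sort _, T.sort_nodup _⟩
    · rw [← List.sum_toFinset _ (T.sort_nodup _), T.sort_toFinset, hsum]⟩
  left_inv L := by
    obtain ⟨L, ⟨hS, hc, hsum⟩, hlen⟩ := L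
    have h := (isChain_tileLT_iff L).1 hc
    exact Subtype.ext ((List.toFinset_sort TileLE h.2).2 h.1)
  right_inv T := Subtype.ext (T.1.sort_toFinset TileLE)

/-- The set of tiles `(b, i + 1)` such that `2 ^ b` occurs in the binary expansion of `g i`. -/
def bitTiles {d : ℕ} (g : Fin d → ℕ) : Finset (ℕ × ℕ) :=
  (Finset.univ.sigma fun i => (g i).bitIndices.toFinset).image fun x => (x.2, (x.1 : ℕ) + 1)

theorem mem_bitTiles {d : ℕ} (g : Fin d → ℕ) (p : ℕ × ℕ) :
    p ∈ bitTiles g ↔ ∃ i : Fin d, p.1 ∈ (g i).bitIndices.toFinset ∧ (i : ℕ) + 1 = p.2 := by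
  obtain ⟨b, l⟩ := p
  simp only [bitTiles, Finset.mem_image, Finset.mem_sigma, Finset.mem_univ, true_and,
    Prod.mk.injEq, Sigma.exists]
  constructor
  · rintro ⟨i, b', hb, rfl, rfl⟩
    exact ⟨i, hb, rfl⟩
  · rintro ⟨i, hb, h⟩
    exact ⟨i, b, hb, rfl, h⟩

theorem sum_bitTiles {d : ℕ} (g : Fin d → ℕ) (f : ℕ × ℕ → ℕ) :
    ∑ p ∈ bitTiles g, f p =
      ∑ i : Fin d, ∑ b ∈ (g i).bitIndices.toFinset, f (b, (i : ℕ) + 1) := by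
  rw [bitTiles, Finset.sum_image, Finset.sum_sigma]
  rintro ⟨i, b⟩ - ⟨j, c⟩ - h
  simp only [Prod.mk.injEq, Nat.add_right_cancel_iff] at h
  obtain ⟨rfl, h⟩ := h
  obtain rfl := Fin.ext h
  rfl

theorem card_bitTiles {d : ℕ} (g : Fin d → ℕ) :
    (bitTiles g).card = ∑ i, binDigitSum (g i) := by
  simp only [binDigitSum_eq_card_bitIndices, Finset.card_eq_sum_ones, sum_bitTiles]

theorem sum_weight_bitTiles {d : ℕ} (g : Fin d → ℕ) :
    ∑ p ∈ bitTiles g, p.2 * 2 ^ p.1 = ∑ i : Fin d, ((i : ℕ) + 1) * g i := by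
  simp only [sum_bitTiles, ← Finset.mul_sum, Finset.sum_toFinset_bitIndices_two_pow]

theorem forall_mem_bitTiles_iff {d : ℕ} (g : Fin d → ℕ) (S : Finset ℕ) :
    (∀ p ∈ bitTiles g, p.2 ∈ S) ↔ ∀ i : Fin d, (i : ℕ) + 1 ∉ S → g i = 0 := by
  constructor
  · intro h i hi
    have hempty : (g i).bitIndices.toFinset = ∅ :=
      Finset.eq_empty_of_forall_notMem fun b hb =>
        hi (h (b, (i : ℕ) + 1) ((mem_bitTiles g _).2 ⟨i, hb, rfl⟩))
    rw [← Finset.sum_toFinset_bitIndices_two_pow (g i), hempty, Finset.sum_empty]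
  · intro h p hp
    obtain ⟨i, hb, hi⟩ := (mem_bitTiles g p).1 hp
    by_contra hpS
    rw [h i (hi ▸ hpS)] at hb
    simp at hb

/-- The number whose binary digits are recorded by the tiles of length `i + 1` in `T`. -/
def tileMultiplicity {d : ℕ} (T : Finset (ℕ × ℕ)) (i : Fin d) : ℕ :=
  ∑ b ∈ (T.filter fun p => p.2 = (i : ℕ) + 1).image Prod.fst, 2 ^ b

theorem mem_bitIndices_tileMultiplicity {d : ℕ} (T : Finset (ℕ × ℕ)) (i : Fin d) (b : ℕ) :
    b ∈ (tileMultiplicity T i).bitIndices.toFinset ↔ (b, (i : ℕ) + 1) ∈ T := by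
  rw [tileMultiplicity, Finset.toFinset_bitIndices_sum_two_pow]
  simp

theorem bitTiles_tileMultiplicity {d : ℕ} (T : Finset (ℕ × ℕ))
    (hT : ∀ p ∈ T, p.2 ∈ Finset.Icc 1 d) :
    bitTiles (tileMultiplicity T : Fin d → ℕ) = T := by
  ext ⟨b, l⟩
  simp only [mem_bitTiles, mem_bitIndices_tileMultiplicity]
  constructor
  · rintro ⟨i, h, rfl⟩
    exact h
  · intro h
    have hl := Finset.mem_Icc.1 (hT _ h)
    have hl' : l - 1 + 1 = l := Nat.sub_add_cancel hl.1
    exact ⟨⟨l - 1, by omega⟩, by simpa only [hl'] using h, hl'⟩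

theorem tileMultiplicity_bitTiles {d : ℕ} (g : Fin d → ℕ) :
    tileMultiplicity (bitTiles g) = g := by
  funext i
  apply Finset.equivBitIndices.injective
  ext b
  rw [Finset.equivBitIndices_apply, mem_bitIndices_tileMultiplicity, mem_bitTiles,
    Finset.equivBitIndices_apply]
  constructor
  · rintro ⟨j, hb, hj⟩
    obtain rfl : j = i := Fin.ext (Nat.succ_injective hj)
    exact hb
  · exact fun hb => ⟨i, hb, rfl⟩

/-- Finite sets of tiles correspond to families of multiplicities. -/
def finsetEquivMultiplicity (d r : ℕ) (S : Finset ℕ) (hS : S ⊆ Finset.Icc 1 d) (c : ℕ∞) :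
    {T : Finset (ℕ × ℕ) // (∀ p ∈ T, p.2 ∈ S) ∧ ∑ p ∈ T, p.2 * 2 ^ p.1 = r ∧
        (T.card : ℕ∞) = c} ≃
      {g : Fin d → ℕ // (∀ i : Fin d, (i : ℕ) + 1 ∉ S → g i = 0) ∧
        ∑ i : Fin d, ((i : ℕ) + 1) * g i = r ∧ ((∑ i, binDigitSum (g i) : ℕ) : ℕ∞) = c} where
  toFun T := ⟨tileMultiplicity T.1, by
    rw [← forall_mem_bitTiles_iff, ← sum_weight_bitTiles, ← card_bitTiles,
      bitTiles_tileMultiplicity T.1 fun p hp => hS (T.2.1 p hp)]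
    exact T.2⟩
  invFun g := ⟨bitTiles g.1, by
    rw [forall_mem_bitTiles_iff, sum_weight_bitTiles, card_bitTiles]
    exact g.2⟩
  left_inv T := Subtype.ext (bitTiles_tileMultiplicity T.1 fun p hp => hS (T.2.1 p hp))
  right_inv g := Subtype.ext (tileMultiplicity_bitTiles g.1)

theorem nextEntry_sum_Ici {d : ℕ} (g : Fin d → ℕ) (i : Fin d) :
    nextEntry (fun i => ∑ j ∈ Finset.Ici i, g j) i = ∑ j ∈ Finset.Ioi i, g j := by
  unfold nextEntry
  split_ifs with h
  · refine Finset.sum_congr ?_ fun _ _ => rfl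
    ext j
    simp only [Finset.mem_Ici, Finset.mem_Ioi, Fin.le_def, Fin.lt_def]
    omega
  · symm
    refine Finset.sum_eq_zero fun j hj => ?_
    have := Fin.lt_def.1 (Finset.mem_Ioi.1 hj)
    omega

theorem sum_Ici_eq_add_sum_Ioi {d : ℕ} (g : Fin d → ℕ) (i : Fin d) :
    ∑ j ∈ Finset.Ici i, g j = g i + ∑ j ∈ Finset.Ioi i, g j := by
  rw [← Finset.Ioi_insert, Finset.sum_insert Finset.notMem_Ioi_self]

theorem sum_Ici_sub_nextEntry {d : ℕ} (g : Fin d → ℕ) (i : Fin d) :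
    ∑ j ∈ Finset.Ici i, g j - nextEntry (fun i => ∑ j ∈ Finset.Ici i, g j) i = g i := by
  rw [nextEntry_sum_Ici, sum_Ici_eq_add_sum_Ioi, Nat.add_sub_cancel]

theorem Antitone.nextEntry_le {d : ℕ} {k : Fin d → ℕ} (hk : Antitone k) (i : Fin d) :
    nextEntry k i ≤ k i := by
  unfold nextEntry
  split_ifs with h
  · exact hk (Fin.le_def.2 (Nat.le_succ _))
  · exact Nat.zero_le _

theorem Antitone.sum_Ici_gaps {d : ℕ} {k : Fin d → ℕ} (hk : Antitone k) (i : Fin d) :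
    ∑ j ∈ Finset.Ici i, (k j - nextEntry k j) = k i := by
  set K : Fin d → ℕ := fun i => ∑ j ∈ Finset.Ici i, (k j - nextEntry k j) with hK
  have hstep : ∀ i, K i = k i - nextEntry k i + nextEntry K i := fun i => by
    rw [hK, nextEntry_sum_Ici]
    exact sum_Ici_eq_add_sum_Ioi _ i
  suffices h : ∀ n, ∀ i : Fin d, d - i = n → K i = k i from h _ i rfl
  intro n
  induction n using Nat.strong_induction_on with
  | _ n ih =>
    intro i hi
    have hnext : nextEntry K i = nextEntry k i := by
      unfold nextEntry
      split_ifs with h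
      · exact ih (d - (i + 1)) (by omega) _ rfl
      · rfl
    rw [hstep, hnext, Nat.sub_add_cancel (hk.nextEntry_le i)]

theorem sum_sum_Ici {d : ℕ} (g : Fin d → ℕ) :
    ∑ i, ∑ j ∈ Finset.Ici i, g j = ∑ j : Fin d, ((j : ℕ) + 1) * g j := by
  rw [Finset.sum_comm' (t' := Finset.univ) (s' := fun j => Finset.Iic j) (by simp)]
  simp

/-- Families of multiplicities correspond to partitions through their consecutive differences. -/
def multiplicityEquivPartition (d r : ℕ) (S : Finset ℕ) (c : ℕ∞) :
    {g : Fin d → ℕ // (∀ i : Fin d, (i : ℕ) + 1 ∉ S → g i = 0) ∧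
        ∑ i : Fin d, ((i : ℕ) + 1) * g i = r ∧ ((∑ i, binDigitSum (g i) : ℕ) : ℕ∞) = c} ≃
      {k : Fin d → ℕ // k ∈ Kset d r ∧ ((sBox k : ℕ) : ℕ∞) = c ∧
        ∀ i : Fin d, ((i : ℕ) + 1) ∉ S → k i = nextEntry k i} where
  toFun g := ⟨fun i => ∑ j ∈ Finset.Ici i, g.1 j, by
    obtain ⟨g, hS, hsum, hc⟩ := g
    refine ⟨⟨fun i j hij => ?_, ?_⟩, ?_, fun i hi => ?_⟩
    · exact Finset.sum_le_sum_of_subset (Finset.Ici_subset_Ici.2 hij)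
    · rw [sum_sum_Ici, hsum]
    · simp only [sBox, sum_Ici_sub_nextEntry, hc]
    · rw [nextEntry_sum_Ici]
      exact (sum_Ici_eq_add_sum_Ioi g i).trans (by rw [hS i hi, zero_add])⟩
  invFun k := ⟨fun i => k.1 i - nextEntry k.1 i, by
    obtain ⟨k, ⟨hk, hsum⟩, hc, hS⟩ := k
    refine ⟨fun i hi => Nat.sub_eq_zero_of_le (hS i hi).le, ?_, hc⟩
    rw [← sum_sum_Ici]
    exact (Finset.sum_congr rfl fun i _ => hk.sum_Ici_gaps i).trans hsum⟩
  left_inv g := Subtype.ext (funext (sum_Ici_sub_nextEntry g.1))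
  right_inv k := Subtype.ext (funext k.2.1.1.sum_Ici_gaps)

theorem stmt0 (d r : ℕ) (hd : 0 < d) (hr : 0 < r) (S : Finset ℕ)
    (hS : S ⊆ Finset.Icc 1 d)
    (hex : ∃ L : List (ℕ × ℕ), IsTiling S r L) :
    Nonempty (Ktilde S r ≃
      {k : Fin d → ℕ | k ∈ Kset d r ∧ ((sBox k : ℕ) : ℕ∞) = stilde S r ∧
        ∀ i : Fin d, ((i : ℕ) + 1) ∉ S → k i = nextEntry k i}) := by
  exact ⟨(tilingEquivFinset S r (stilde S r)).trans
    ((finsetEquivMultiplicity d r S hS (stilde S r)).trans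
      (multiplicityEquivPartition d r S (stilde S r)))⟩
end

section
/- Let S be a finite set of positive integers and let r be a positive integer. Suppose r = Σ_{i=1}^{ν} ℓ_i·2^{b_i} for some ℓ_1,…,ℓ_ν ∈ S and nonnegative integers b_1,…,b_ν, with no ordering or distinctness conditions imposed on the pairs (b_i,ℓ_i). Then there exists an r-tiling sequence with tiles in S of length at most ν; in particular s̃(r,S) ≤ ν, and consequently s̃(r_1+r_2,S) ≤ s̃(r_1,S)+s̃(r_2,S) for all positive integers r_1, r_2. -/
open scoped BigOperators

/-- A list of pairs with entries in `S` can be merged and sorted into a tiling sequence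
with the same total and at most the same length. -/
theorem exists_isTiling_length_le (S : Finset ℕ) (L : List (ℕ × ℕ)) (hL : ∀ p ∈ L, p.2 ∈ S) :
    ∃ L' : List (ℕ × ℕ), IsTiling S (L.map fun p => p.2 * 2 ^ p.1).sum L' ∧
      L'.length ≤ L.length := by
  induction hn : L.length using Nat.strong_induction_on generalizing L with
  | _ n ih =>
    by_cases hd : L.Nodup
    · let R : ℕ × ℕ → ℕ × ℕ → Prop := fun p q => p.1 < q.1 ∨ (p.1 = q.1 ∧ q.2 ≤ p.2)
      have : DecidableRel R := fun _ _ => inferInstanceAs (Decidable (_ ∨ _))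
      have : Std.Total R := ⟨fun p q => by simp only [R]; omega⟩
      have : IsTrans (ℕ × ℕ) R := ⟨fun p q s => by simp only [R]; omega⟩
      have hperm := L.perm_insertionSort R
      refine ⟨L.insertionSort R, ⟨fun p hp => hL p (hperm.mem_iff.1 hp), ?_,
        (hperm.map _).sum_eq⟩, by rw [hperm.length_eq, hn]⟩
      refine List.Pairwise.isChain ?_
      refine ((L.pairwise_insertionSort R).and (hperm.nodup_iff.2 hd)).imp ?_
      rintro ⟨a, x⟩ ⟨c, y⟩ ⟨h, hne⟩
      simp only [R, ne_eq, Prod.mk.injEq] at h hne ⊢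
      omega
    · obtain ⟨p, hp⟩ := List.exists_duplicate_iff_not_nodup.2 hd
      obtain ⟨M, hM⟩ := (List.duplicate_iff_sublist.1 hp).exists_perm_append
      have hlen := hM.length_eq
      simp only [List.length_append, List.length_cons, List.length_nil] at hlen
      have hmem : ∀ q ∈ (p.1 + 1, p.2) :: M, q.2 ∈ S := by
        intro q hq
        rcases List.mem_cons.1 hq with rfl | hq
        · exact hL p hp.mem
        · exact hL q (hM.mem_iff.2 (List.mem_append_right _ hq))
      obtain ⟨L', hL', hle⟩ := ih (M.length + 1) (by omega) _ hmem rfl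
      refine ⟨L', ?_, by omega⟩
      convert hL' using 1
      rw [(hM.map _).sum_eq]
      simp only [List.cons_append, List.nil_append, List.map_cons, List.sum_cons]
      ring

theorem stilde_le_length {S : Finset ℕ} {r : ℕ} {L : List (ℕ × ℕ)} (h : IsTiling S r L) :
    stilde S r ≤ L.length :=
  sInf_le ⟨L, h, rfl⟩

/-- When `s̃(r,S)` is finite, it is attained by some tiling sequence. -/
theorem exists_isTiling_length_eq_stilde {S : Finset ℕ} {r : ℕ} (h : stilde S r ≠ ⊤) :
    ∃ L : List (ℕ × ℕ), IsTiling S r L ∧ (L.length : ℕ∞) = stilde S r := by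
  have hne : {n : ℕ∞ | ∃ L : List (ℕ × ℕ), IsTiling S r L ∧ (L.length : ℕ∞) = n}.Nonempty := by
    by_contra hempty
    rw [Set.not_nonempty_iff_eq_empty] at hempty
    exact h (by rw [stilde, hempty, sInf_empty])
  exact csInf_mem hne

theorem stilde_add_le (S : Finset ℕ) (r₁ r₂ : ℕ) :
    stilde S (r₁ + r₂) ≤ stilde S r₁ + stilde S r₂ := by
  by_cases h₁ : stilde S r₁ = ⊤
  · simp [h₁]
  by_cases h₂ : stilde S r₂ = ⊤
  · simp [h₂]
  obtain ⟨L₁, hL₁, e₁⟩ := exists_isTiling_length_eq_stilde h₁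
  obtain ⟨L₂, hL₂, e₂⟩ := exists_isTiling_length_eq_stilde h₂
  obtain ⟨L, hL, hle⟩ := exists_isTiling_length_le S (L₁ ++ L₂) fun p hp =>
    (List.mem_append.1 hp).elim (hL₁.1 p) (hL₂.1 p)
  rw [List.map_append, List.sum_append, hL₁.2.2, hL₂.2.2] at hL
  rw [List.length_append] at hle
  rw [← e₁, ← e₂]
  exact (stilde_le_length hL).trans (by exact_mod_cast hle)

theorem stmt3 (S : Finset ℕ) (hpos : ∀ ℓ ∈ S, 0 < ℓ) (r : ℕ) (hr : 0 < r)
    (ν : ℕ) (ℓ b : Fin ν → ℕ) (hℓ : ∀ i, ℓ i ∈ S)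
    (hsum : ∑ i, ℓ i * 2 ^ b i = r) :
    (∃ L : List (ℕ × ℕ), IsTiling S r L ∧ L.length ≤ ν) ∧
    stilde S r ≤ (ν : ℕ∞) ∧
    (∀ r₁ r₂ : ℕ, 0 < r₁ → 0 < r₂ →
      stilde S (r₁ + r₂) ≤ stilde S r₁ + stilde S r₂) := by
  obtain ⟨L, hL, hle⟩ := exists_isTiling_length_le S (List.ofFn fun i => (b i, ℓ i)) (by
    intro p hp
    obtain ⟨i, rfl⟩ := List.mem_ofFn.1 hp
    exact hℓ i)
  rw [List.map_ofFn, List.sum_ofFn] at hL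
  simp only [Function.comp_apply, hsum] at hL
  rw [List.length_ofFn] at hle
  exact ⟨⟨L, hL, hle⟩, (stilde_le_length hL).trans (by exact_mod_cast hle),
    fun r₁ r₂ _ _ => stilde_add_le S r₁ r₂⟩
end

section
/- Let S be a finite set of positive integers, and let ν and j be positive integers. Define T̃(ν,j,S) to be the set of all finite sequences of integer pairs (b_1,ℓ_1),…,(b_ν,ℓ_ν) such that ℓ_i ∈ S and 0 ≤ b_i ≤ b_{i+1} for all i, ℓ_i > ℓ_{i+1} whenever b_i = b_{i+1}, and Σ_{i=1}^{ν} ℓ_i·2^{b_i} ≡ −j (mod 2^{b_ν}). Then T̃(ν,j,S) is a finite set. -/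
open scoped BigOperators

/-- If the exponents of the tiles in `L` are all at least `b`, then `2 ^ b` divides the sum. -/
theorem two_pow_dvd_sum_tiles (b : ℕ) (L : List (ℕ × ℕ)) (h : ∀ q ∈ L, b ≤ q.1) :
    (2 ^ b : ℤ) ∣ (L.map fun q => (q.2 * 2 ^ q.1 : ℤ)).sum := by
  refine List.dvd_sum fun x hx => ?_
  obtain ⟨q, hq, rfl⟩ := List.mem_map.1 hx
  exact Dvd.dvd.mul_left (pow_dvd_pow 2 (h q hq)) _

/-- The smallest exponent of a tiling sequence of `-j` modulo its largest power of two is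
less than `j`. -/
theorem head_exponent_lt {j : ℕ} (hj : 0 < j) (p : ℕ × ℕ) (L : List (ℕ × ℕ))
    (hmin : ∀ q ∈ p :: L, p.1 ≤ q.1)
    (hmod : ∀ q : ℕ × ℕ, (p :: L).getLast? = some q →
      (((p :: L).map fun q => (q.2 * 2 ^ q.1 : ℤ)).sum ≡ -(j : ℤ) [ZMOD (2 ^ q.1 : ℤ)])) :
    p.1 < j := by
  have hlast := hmod _ (List.getLast?_eq_some_getLast (List.cons_ne_nil p L))
  have hle := hmin _ (List.getLast_mem (List.cons_ne_nil p L))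
  have hneg : (2 ^ p.1 : ℤ) ∣ -(j : ℤ) :=
    (hlast.of_dvd (pow_dvd_pow 2 hle)).dvd_iff.1
      (two_pow_dvd_sum_tiles p.1 _ hmin)
  have hdvd : 2 ^ p.1 ∣ j := by exact_mod_cast (dvd_neg.1 hneg)
  exact Nat.lt_two_pow_self.trans_le (Nat.le_of_dvd hj hdvd)

/-- Finiteness of the set of tiling sequences of `-j`, requiring only that the exponents are
weakly increasing. -/
theorem finite_tilings_modulo (S : Finset ℕ) (ν j : ℕ) (hj : 0 < j) :
    {L : List (ℕ × ℕ) | L.length = ν ∧ (∀ p ∈ L, p.2 ∈ S) ∧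
      L.Pairwise (fun p q => p.1 ≤ q.1) ∧
      ∀ p : ℕ × ℕ, L.getLast? = some p →
        ((L.map fun q => (q.2 * 2 ^ q.1 : ℤ)).sum ≡ -(j : ℤ) [ZMOD (2 ^ p.1 : ℤ)])}.Finite := by
  induction ν generalizing j with
  | zero =>
    refine (Set.finite_singleton []).subset fun L hL => ?_
    exact List.length_eq_zero_iff.1 hL.1
  | succ ν ih =>
    refine ((Finset.range j ×ˢ S).finite_toSet.biUnion fun p _ =>
      (ih (j + p.2 * 2 ^ p.1) (by positivity)).image (List.cons p)).subset ?_
    rintro (_ | ⟨p, L⟩) ⟨hlen, hmem, hsort, hmod⟩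
    · simp at hlen
    have hsort' := List.pairwise_cons.1 hsort
    have hlt : p.1 < j := head_exponent_lt hj p L (by simpa using hsort'.1) hmod
    refine Set.mem_biUnion (x := p) ?_ ⟨L, ⟨by simpa using hlen,
      fun q hq => hmem q (List.mem_cons_of_mem p hq), hsort'.2, fun q hq => ?_⟩, rfl⟩
    · simpa using ⟨hlt, hmem p List.mem_cons_self⟩
    · have h := hmod q (by simp [List.getLast?_cons, hq])
      rw [List.map_cons, List.sum_cons] at h
      convert h.sub_right (p.2 * 2 ^ p.1 : ℤ) using 1
      · ring
      · push_cast
        ring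

theorem stmt4 (S : Finset ℕ) (hpos : ∀ ℓ ∈ S, 0 < ℓ) (ν j : ℕ)
    (hν : 0 < ν) (hj : 0 < j) :
    {L : List (ℕ × ℕ) | L.length = ν ∧ (∀ p ∈ L, p.2 ∈ S) ∧
      L.Chain' (fun p q => p.1 ≤ q.1 ∧ (p.1 = q.1 → q.2 < p.2)) ∧
      ∀ p : ℕ × ℕ, L.getLast? = some p →
        ((L.map fun q => (q.2 * 2 ^ q.1 : ℤ)).sum ≡ -(j : ℤ) [ZMOD (2 ^ p.1 : ℤ)])}.Finite := by
  refine (finite_tilings_modulo S ν j hj).subset ?_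
  rintro L ⟨hlen, hmem, hchain, hmod⟩
  have : IsTrans (ℕ × ℕ) (fun p q => p.1 ≤ q.1) := ⟨fun _ _ _ => le_trans⟩
  exact ⟨hlen, hmem, (hchain.imp fun _ _ h => h.1).pairwise, hmod⟩
end

section
/- Let S = {1,3,9,11} and r = 2^{17}−4. Then s̃(r,S) = 6 and the unique r-tiling sequence with tiles in S of length 6 is (2,9),(3,11),(7,9),(8,11),(12,9),(13,11); that is, 2^{17}−4 = 11·2^{13}+9·2^{12}+11·2^{8}+9·2^{7}+11·2^{3}+9·2^{2} and K̃(r,S) consists of exactly this one sequence. -/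
open scoped BigOperators

/-- The number of 1's among the last `N` binary digits of `n`. -/
def lowBitCount : ℕ → ℕ → ℕ
  | 0, _ => 0
  | N + 1, n => n % 2 + lowBitCount N (n / 2)

theorem lowBitCount_zero (N : ℕ) : lowBitCount N 0 = 0 := by
  induction N with
  | zero => rfl
  | succ N ih => simpa [lowBitCount] using ih

theorem lowBitCount_one_le (N : ℕ) : lowBitCount N 1 ≤ 1 := by
  cases N <;> simp [lowBitCount, lowBitCount_zero]

theorem lowBitCount_add_le (N : ℕ) :
    ∀ a b : ℕ, lowBitCount N (a + b) ≤ lowBitCount N a + lowBitCount N b := by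
  induction N with
  | zero => intro a b; simp [lowBitCount]
  | succ N ih =>
    intro a b
    simp only [lowBitCount]
    have h := ih (a / 2) (b / 2)
    by_cases hab : a % 2 = 1 ∧ b % 2 = 1
    · rw [show (a + b) / 2 = a / 2 + b / 2 + 1 by omega]
      have h₁ := ih (a / 2 + b / 2) 1
      have h₂ := lowBitCount_one_le N
      omega
    · rw [show (a + b) / 2 = a / 2 + b / 2 by omega]
      omega

theorem lowBitCount_le_succ (N : ℕ) : ∀ n : ℕ, lowBitCount N n ≤ lowBitCount (N + 1) n := by
  induction N with
  | zero => intro n; simp [lowBitCount]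
  | succ N ih =>
    intro n
    rw [lowBitCount, lowBitCount]
    exact Nat.add_le_add_left (ih _) _

theorem lowBitCount_mul_two_pow_le (N n d : ℕ) :
    lowBitCount N (n * 2 ^ d) ≤ lowBitCount N n := by
  induction d with
  | zero => simp
  | succ d ih =>
    refine le_trans ?_ ih
    cases N with
    | zero => simp [lowBitCount]
    | succ N =>
      rw [pow_succ, ← mul_assoc, lowBitCount, Nat.mul_mod_left, Nat.mul_div_cancel _ two_pos,
        zero_add]
      exact lowBitCount_le_succ N _

theorem lowBitCount_le_mul_length {N w b : ℕ} :
    ∀ (L : List (ℕ × ℕ)) (r : ℕ), (∀ p ∈ L, b ≤ p.1 ∧ lowBitCount N p.2 ≤ w) →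
      (L.map fun p => p.2 * 2 ^ p.1).sum = r * 2 ^ b → lowBitCount N r ≤ w * L.length := by
  intro L
  induction L with
  | nil =>
    intro r _ hsum
    obtain rfl : r = 0 := by simpa using hsum.symm
    simp [lowBitCount_zero]
  | cons p L ih =>
    intro r hL hsum
    obtain ⟨hbp, hw⟩ := hL p (by simp)
    obtain ⟨d, hd⟩ := Nat.exists_eq_add_of_le' hbp
    rw [List.map_cons, List.sum_cons, hd, pow_add, ← mul_assoc] at hsum
    have hle : p.2 * 2 ^ d ≤ r :=
      Nat.le_of_mul_le_mul_right (hsum ▸ Nat.le_add_right _ _) (Nat.two_pow_pos b)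
    have h₁ := ih (r - p.2 * 2 ^ d) (fun q hq => hL q (by simp [hq])) (by
      rw [Nat.sub_mul]
      omega)
    have h₂ := lowBitCount_add_le N (p.2 * 2 ^ d) (r - p.2 * 2 ^ d)
    have h₃ := lowBitCount_mul_two_pow_le N p.2 d
    rw [Nat.add_sub_cancel' hle] at h₂
    rw [List.length_cons, Nat.mul_succ]
    omega

/-- Enumerates the tilings of `r * 2 ^ b` by at most `k` tiles from `T`, all tiles lying at positions
`≥ b`, those at position `b` being `< m`. At each step, either a tile is placed at position `b`, or
`r` is even and the search moves on to position `b + 1`, where tiles need only be `< M`. Branches in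
which `r` has too many binary digits 1 for `k` tiles with at most `w` such digits are pruned. -/
def tilingSearch (T : List ℕ) (M N w : ℕ) : ℕ → ℕ → ℕ → ℕ → ℕ → List (List (ℕ × ℕ))
  | 0, _, _, _, _ => []
  | fuel + 1, b, m, r, k =>
    bif Nat.beq r 0 then [[]] else bif Nat.ble (lowBitCount N r) (w * k) then
      (T.flatMap fun l => bif Nat.ble (l + 1) m && Nat.ble l r then
          (tilingSearch T M N w fuel b l (r - l) (k - 1)).map (List.cons (b, l)) else []) ++
        bif Nat.beq (r % 2) 0 then tilingSearch T M N w fuel (b + 1) M (r / 2) k else []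
    else []

theorem mem_tilingSearch {T : List ℕ} {M N w : ℕ} (hT : ∀ l ∈ T, 0 < l ∧ l < M)
    (hw : ∀ l ∈ T, lowBitCount N l ≤ w) :
    ∀ (fuel n b m r k : ℕ) (L : List (ℕ × ℕ)), r < 2 ^ n → n + k < fuel →
      (∀ p ∈ L, p.2 ∈ T) →
      L.Pairwise (fun p q => p.1 ≤ q.1 ∧ (p.1 = q.1 → q.2 < p.2)) →
      (∀ p ∈ L, b < p.1 ∨ (p.1 = b ∧ p.2 < m)) →
      (L.map fun p => p.2 * 2 ^ p.1).sum = r * 2 ^ b → L.length ≤ k →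
      L ∈ tilingSearch T M N w fuel b m r k := by
  intro fuel
  induction fuel with
  | zero => intros; omega
  | succ fuel ih =>
    intro n b m r k L hr hfuel hLT hpw hb hsum hlen
    rw [tilingSearch]
    rcases Nat.eq_zero_or_pos r with rfl | hr0
    · cases L with
      | nil => simp
      | cons p L =>
        have := (hT p.2 (hLT p (by simp))).1
        simp only [List.map_cons, List.sum_cons, zero_mul] at hsum
        have : 0 < p.2 * 2 ^ p.1 := by positivity
        omega
    cases L with
    | nil =>
      have : 0 < r * 2 ^ b := by positivity
      simp at hsum
      omega
    | cons p L =>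
    have hr1 : Nat.beq r 0 = false :=
      Bool.eq_false_iff.2 fun h => hr0.ne' (Nat.eq_of_beq_eq_true h)
    have hprune : Nat.ble (lowBitCount N r) (w * k) = true := by
      refine Nat.ble_eq_true_of_le (le_trans (lowBitCount_le_mul_length _ r (fun q hq => ⟨?_, ?_⟩) hsum)
        (Nat.mul_le_mul_left w hlen))
      · have := hb q hq
        omega
      · exact hw _ (hLT q hq)
    rw [hr1, hprune, cond_false, cond_true, List.mem_append]
    have hpL := List.pairwise_cons.1 hpw
    rcases hb p (by simp) with hp | ⟨hp, hpm⟩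
    · right
      have hdvd : 2 ^ (b + 1) ∣ r * 2 ^ b := by
        rw [← hsum]
        refine List.dvd_sum fun x hx => ?_
        obtain ⟨q, hq, rfl⟩ := List.mem_map.1 hx
        have hq1 : b + 1 ≤ q.1 := by
          rcases List.mem_cons.1 hq with rfl | hq
          · exact hp
          · exact hp.trans_le (hpL.1 q hq).1
        exact Dvd.dvd.mul_left (pow_dvd_pow 2 hq1) _
      have hr2 : 2 ∣ r := by
        rw [pow_succ, mul_comm] at hdvd
        exact Nat.dvd_of_mul_dvd_mul_right (by positivity) hdvd
      obtain ⟨c, rfl⟩ := hr2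
      have hc : Nat.beq (2 * c % 2) 0 = true := by simp
      rw [hc, cond_true, Nat.mul_div_cancel_left c two_pos]
      obtain ⟨n, rfl⟩ : ∃ n', n = n' + 1 := Nat.exists_eq_succ_of_ne_zero (by
        rintro rfl
        omega)
      refine ih n (b + 1) M c k _ (by rw [pow_succ] at hr; omega) (by omega) hLT hpw ?_
        (by rw [hsum]; ring) hlen
      intro q hq
      have hqM := (hT q.2 (hLT q hq)).2
      rcases List.mem_cons.1 hq with rfl | hq
      · omega
      · have := (hpL.1 q hq).1
        omega
    · left
      obtain ⟨b', l⟩ := p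
      obtain rfl : b' = b := hp
      simp only [List.map_cons, List.sum_cons] at hsum
      have hlr : l ≤ r := Nat.le_of_mul_le_mul_right (hsum ▸ Nat.le_add_right _ _)
        (Nat.two_pow_pos b')
      refine List.mem_flatMap.2 ⟨l, hLT (b', l) (by simp), ?_⟩
      have hcond : (Nat.ble (l + 1) m && Nat.ble l r) = true := by
        rw [Bool.and_eq_true, Nat.ble_eq, Nat.ble_eq]
        exact ⟨hpm, hlr⟩
      rw [hcond, cond_true]
      simp only [List.length_cons] at hlen
      refine List.mem_map_of_mem (ih n b' l (r - l) (k - 1) L (by omega) (by omega)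
        (fun q hq => hLT q (by simp [hq])) hpL.2 ?_ ?_ (by omega))
      · intro q hq
        have := hpL.1 q hq
        simp only at this
        omega
      · rw [Nat.sub_mul]
        omega

theorem IsTiling.pairwise {S : Finset ℕ} {r : ℕ} {L : List (ℕ × ℕ)} (h : IsTiling S r L) :
    L.Pairwise (fun p q => p.1 ≤ q.1 ∧ (p.1 = q.1 → q.2 < p.2)) := by
  have : Trans (fun p q : ℕ × ℕ => p.1 ≤ q.1 ∧ (p.1 = q.1 → q.2 < p.2))
      (fun p q : ℕ × ℕ => p.1 ≤ q.1 ∧ (p.1 = q.1 → q.2 < p.2))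
      (fun p q : ℕ × ℕ => p.1 ≤ q.1 ∧ (p.1 = q.1 → q.2 < p.2)) :=
    ⟨fun h₁ h₂ => by omega⟩
  exact List.isChain_iff_pairwise.1 h.2.1

theorem tilingSearch_eq : tilingSearch [11, 9, 3, 1] 12 17 3 24 0 12 131068 6 =
    [[(2, 9), (3, 11), (7, 9), (8, 11), (12, 9), (13, 11)]] := by
  decide +kernel

theorem IsTiling.eq_of_length_le_six {L : List (ℕ × ℕ)}
    (h : IsTiling {1, 3, 9, 11} (2 ^ 17 - 4) L) (hL : L.length ≤ 6) :
    L = [(2, 9), (3, 11), (7, 9), (8, 11), (12, 9), (13, 11)] := by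
  have hmem : ∀ p ∈ L, p.2 ∈ [11, 9, 3, 1] := fun p hp => by
    have := h.1 p hp
    simp only [Finset.mem_insert, Finset.mem_singleton] at this
    simp only [List.mem_cons, List.not_mem_nil, or_false]
    omega
  have hT : ∀ l ∈ [11, 9, 3, 1], 0 < l ∧ l < 12 := by decide
  have := mem_tilingSearch (N := 17) (w := 3) hT (by decide) 24 17 0 12 131068 6 L (by norm_num)
    (by norm_num) hmem h.pairwise
    (fun p hp => by
      have := (hT _ (hmem p hp)).2
      omega) (by simpa using h.2.2) hL
  rwa [tilingSearch_eq, List.mem_singleton] at this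

theorem isTiling_six : IsTiling {1, 3, 9, 11} (2 ^ 17 - 4)
    [(2, 9), (3, 11), (7, 9), (8, 11), (12, 9), (13, 11)] := by
  refine ⟨by decide, ?_, by norm_num⟩
  exact show List.IsChain _ _ by simp

theorem stilde_eq_six : stilde {1, 3, 9, 11} (2 ^ 17 - 4) = 6 := by
  refine le_antisymm (sInf_le ⟨_, isTiling_six, rfl⟩) (le_sInf ?_)
  rintro _ ⟨L, hL, rfl⟩
  rcases le_total L.length 6 with h | h
  · rw [hL.eq_of_length_le_six h]
    rfl
  · exact_mod_cast h

theorem stmt5 :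
    (2 ^ 17 - 4 : ℕ) =
      11 * 2 ^ 13 + 9 * 2 ^ 12 + 11 * 2 ^ 8 + 9 * 2 ^ 7 + 11 * 2 ^ 3 + 9 * 2 ^ 2 ∧
    stilde {1, 3, 9, 11} (2 ^ 17 - 4) = 6 ∧
    Ktilde {1, 3, 9, 11} (2 ^ 17 - 4) =
      {[(2, 9), (3, 11), (7, 9), (8, 11), (12, 9), (13, 11)]} := by
  refine ⟨by norm_num, stilde_eq_six, ?_⟩
  ext L
  rw [Set.mem_singleton_iff]
  constructor
  · rintro ⟨hL, hlen⟩
    rw [stilde_eq_six] at hlen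
    exact hL.eq_of_length_le_six (by exact_mod_cast hlen.le)
  · rintro rfl
    exact ⟨isTiling_six, by rw [stilde_eq_six]; rfl⟩
end

section
/- Let S = {1,3,9,11}. Then: (i) for all integers m ≥ 1 and all integers n with 1 ≤ n ≤ 12, s̃(m·2^{n+4}−4, S) ≥ ⌈n/2⌉; (ii) for all integers m ≥ 3, s̃(m·2^{17}−4, S) ≥ 7; and (iii) s̃(2^{17}−4, S) = 6. -/
open scoped BigOperators

/-- The tiles of a tiling sequence at position `0` form a subset `T` of `S`; the remaining tiles,
moved down one position, form a tiling sequence of `(r - ∑ T) / 2`. -/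
lemma IsTiling.exists_bottom {S : Finset ℕ} {r : ℕ} {L : List (ℕ × ℕ)} (h : IsTiling S r L) :
    ∃ T ⊆ S, ∃ r' L', IsTiling S r' L' ∧ r = ∑ t ∈ T, t + 2 * r' ∧
      L.length = T.card + L'.length := by
  obtain ⟨hS, hc, hr⟩ := h
  have hp : L.Pairwise (fun p q => p.1 ≤ q.1 ∧ (p.1 = q.1 → q.2 < p.2)) := by
    have : IsTrans (ℕ × ℕ) (fun p q => p.1 ≤ q.1 ∧ (p.1 = q.1 → q.2 < p.2)) :=
      ⟨fun a b c hab hbc => ⟨hab.1.trans hbc.1, fun hac =>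
        (hbc.2 (by omega)).trans (hab.2 (by omega))⟩⟩
    exact List.isChain_iff_pairwise.1 hc
  set B := (L.filter (fun p => p.1 = 0)).map Prod.snd with hB
  set U := (L.filter (fun p => p.1 ≠ 0)).map (fun p => (p.1 - 1, p.2)) with hU
  have hBnodup : B.Nodup := by
    rw [hB, List.Nodup, List.pairwise_map, List.pairwise_filter]
    refine hp.imp fun {a b} hab ha hb => ?_
    simp only [decide_eq_true_eq] at ha hb
    exact (hab.2 (ha.trans hb.symm)).ne'
  have hlen : L.length = B.length + U.length := by
    rw [hB, hU]
    clear * -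
    induction L with
    | nil => rfl
    | cons p L ih =>
      by_cases hp0 : p.1 = 0 <;> simp [hp0] at ih ⊢ <;> omega
  have hsum : (L.map fun p => p.2 * 2 ^ p.1).sum
      = B.sum + 2 * (U.map fun p => p.2 * 2 ^ p.1).sum := by
    rw [hB, hU]
    clear * -
    induction L with
    | nil => rfl
    | cons p L ih =>
      obtain ⟨b, l⟩ := p
      cases b with
      | zero => simp at ih ⊢; omega
      | succ b => simp [pow_succ] at ih ⊢; rw [ih]; ring
  refine ⟨B.toFinset, ?_, _, U, ⟨?_, ?_, rfl⟩, ?_, ?_⟩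
  · intro t ht
    simp only [hB, List.mem_toFinset, List.mem_map, List.mem_filter] at ht
    obtain ⟨p, ⟨hpL, -⟩, rfl⟩ := ht
    exact hS p hpL
  · intro q hq
    simp only [hU, List.mem_map, List.mem_filter] at hq
    obtain ⟨p, ⟨hpL, -⟩, rfl⟩ := hq
    exact hS p hpL
  · refine List.Pairwise.isChain ?_
    rw [hU, List.pairwise_map, List.pairwise_filter]
    refine hp.imp fun {a b} hab ha hb => ?_
    simp only [ne_eq, decide_not, Bool.not_eq_true', decide_eq_false_iff_not] at ha hb
    exact ⟨by have := hab.1; omega, fun he => hab.2 (by omega)⟩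
  · rw [← hr, hsum, List.sum_toFinset _ hBnodup, List.map_id']
  · rw [hlen, List.toFinset_card_of_nodup hBnodup]

lemma le_stilde {S : Finset ℕ} {r k : ℕ} (h : ∀ L, IsTiling S r L → k ≤ L.length) :
    (k : ℕ∞) ≤ stilde S r := by
  refine le_sInf ?_
  rintro _ ⟨L, hL, rfl⟩
  exact_mod_cast h L hL

/-- The pairs (number of tiles, total length) of the subsets of `{1, 3, 9, 11}`. -/
def tileWeights : List (ℕ × ℕ) :=
  [1, 3, 9, 11].sublists.map fun T => (T.length, T.sum)

lemma mem_tileWeights : ∀ T ⊆ ({1, 3, 9, 11} : Finset ℕ), (T.card, ∑ t ∈ T, t) ∈ tileWeights := by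
  intro T hT
  rw [← Finset.mem_powerset] at hT
  revert T
  decide +kernel

/-- If `g` bounds the number of tiles needed from each deficit `y ≤ 24`, then `refineBound g` does so
with one more binary position available. The bounds are truncated at `7`. -/
def refineBound (g : List ℕ) : List ℕ :=
  (List.range 25).map fun y =>
    ((tileWeights.filter fun w => (y + w.2) % 2 = 0).map
      fun w => w.1 + g.getD ((y + w.2) / 2) 0).foldr min 7

lemma foldr_min_le {l : List ℕ} {a c : ℕ} (h : a ∈ l) : l.foldr min c ≤ a := by
  induction l with
  | nil => simp at h
  | cons b l ih =>
    rcases List.mem_cons.1 h with rfl | h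
    · exact min_le_left _ _
    · exact (min_le_right _ _).trans (ih h)

lemma refineBound_getD_le {g : List ℕ} {y : ℕ} (hy : y ≤ 24) {w : ℕ × ℕ} (hw : w ∈ tileWeights)
    (hpar : (y + w.2) % 2 = 0) :
    (refineBound g).getD y 0 ≤ w.1 + g.getD ((y + w.2) / 2) 0 := by
  have hlt : y < 25 := by omega
  rw [refineBound, List.getD_eq_getElem _ _ (by simpa using hlt), List.getElem_map,
    List.getElem_range]
  exact foldr_min_le (List.mem_map.2 ⟨w, List.mem_filter.2 ⟨hw, by simpa using hpar⟩, rfl⟩)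

lemma iterate_refineBound_le_length {g : List ℕ} {m : ℕ}
    (hg : ∀ r y L, IsTiling {1, 3, 9, 11} r L → r + y = m → g.getD y 0 ≤ L.length) (N : ℕ) :
    ∀ r y L, IsTiling {1, 3, 9, 11} r L → y ≤ 24 → r + y = m * 2 ^ N →
      (refineBound^[N] g).getD y 0 ≤ L.length := by
  induction N with
  | zero => intro r y L hL _ hr; exact hg r y L hL (by simpa using hr)
  | succ N ih =>
    intro r y L hL hy hr
    obtain ⟨T, hT, r', L', hL', rfl, hlen⟩ := hL.exists_bottom
    have hle : ∑ t ∈ T, t ≤ 24 := Finset.sum_le_sum_of_subset hT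
    have hw := mem_tileWeights T hT
    rw [pow_succ, ← mul_assoc] at hr
    have hpar : (y + ∑ t ∈ T, t) % 2 = 0 := by omega
    have hrec := ih r' ((y + ∑ t ∈ T, t) / 2) L' hL' (by omega) (by omega)
    rw [Function.iterate_succ_apply']
    have := refineBound_getD_le (g := refineBound^[N] g) hy hw hpar
    simp only at this
    omega

lemma half_le_length {m n : ℕ} (hm : 1 ≤ m) (hn : n ≤ 12) {L : List (ℕ × ℕ)}
    (hL : IsTiling {1, 3, 9, 11} (m * 2 ^ (n + 4) - 4) L) : (n + 1) / 2 ≤ L.length := by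
  have hpow : 2 ^ 4 ≤ m * 2 ^ (n + 4) :=
    (Nat.pow_le_pow_right two_pos (by omega)).trans (Nat.le_mul_of_pos_left _ hm)
  have hbound : ∀ n ≤ 12, (n + 1) / 2 ≤ (refineBound^[n + 4] []).getD 4 0 := by decide +kernel
  exact (hbound n hn).trans (iterate_refineBound_le_length (m := m) (by simp) _ _ 4 L hL
    (by norm_num) (by omega))

lemma seven_le_length {m : ℕ} (hm : 2 ≤ m) {L : List (ℕ × ℕ)}
    (hL : IsTiling {1, 3, 9, 11} (m * 2 ^ 17 - 4) L) : 7 ≤ L.length := by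
  have hbound : 7 ≤ (refineBound^[17] [1, 1]).getD 4 0 := by decide +kernel
  refine hbound.trans (iterate_refineBound_le_length (m := m) ?_ _ _ 4 L hL (by norm_num)
    (by omega))
  rintro r y L ⟨-, -, hsum⟩ hr
  rcases L with _ | ⟨p, L⟩
  · obtain rfl : r = 0 := by simpa using hsum.symm
    obtain rfl : y = m := by omega
    rw [List.getD_eq_default _ _ (by simpa using hm)]
    exact Nat.zero_le _
  · rcases y with _ | _ | y <;> simp

theorem stmt6 :
    (∀ m n : ℕ, 1 ≤ m → 1 ≤ n → n ≤ 12 →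
      (((n + 1) / 2 : ℕ) : ℕ∞) ≤ stilde {1, 3, 9, 11} (m * 2 ^ (n + 4) - 4)) ∧
    (∀ m : ℕ, 3 ≤ m → (7 : ℕ∞) ≤ stilde {1, 3, 9, 11} (m * 2 ^ 17 - 4)) ∧
    stilde {1, 3, 9, 11} (2 ^ 17 - 4) = 6 := by
  refine ⟨fun m n hm _ hn => le_stilde fun L hL => half_le_length hm hn hL,
    fun m hm => le_stilde (k := 7) fun L hL => seven_le_length (by omega) hL, le_antisymm ?_ ?_⟩
  · refine sInf_le ⟨[(2, 9), (3, 11), (7, 9), (8, 11), (12, 9), (13, 11)], ⟨?_, ?_, ?_⟩, rfl⟩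
    · simp
    · rw [List.Chain']; decide
    · norm_num
  · exact le_stilde (k := 6) fun L hL =>
      half_le_length (m := 2) (n := 12) (by norm_num) le_rfl (by norm_num at hL ⊢; exact hL)
end

section
/- Let S = {1,3,9,13} and r = 2^{22}−4. Then s̃(r,S) = 8 and the unique r-tiling sequence with tiles in S of length 8 is (2,13),(3,9),(7,13),(8,9),(12,13),(13,9),(17,13),(18,9); that is, 2^{22}−4 = 9·2^{18}+13·2^{17}+9·2^{13}+13·2^{12}+9·2^{8}+13·2^{7}+9·2^{3}+13·2^{2} and K̃(r,S) consists of exactly this one sequence. -/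
open scoped BigOperators

theorem binDigitSum_two_mul (n : ℕ) : binDigitSum (2 * n) = binDigitSum n := by
  rcases Nat.eq_zero_or_pos n with rfl | hn
  · rfl
  · simp [binDigitSum, Nat.digits_def' one_lt_two (by omega : 0 < 2 * n)]

theorem binDigitSum_two_mul_add_one (n : ℕ) :
    binDigitSum (2 * n + 1) = binDigitSum n + 1 := by
  have h : (1 + 2 * n) / 2 = n := by omega
  simp [binDigitSum, h, add_comm]

theorem binDigitSum_mul_two_pow (n b : ℕ) : binDigitSum (n * 2 ^ b) = binDigitSum n := by
  induction b with
  | zero => simp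
  | succ b ih => rw [pow_succ, ← mul_assoc, mul_comm, binDigitSum_two_mul, ih]

theorem binDigitSum_add_le (m n : ℕ) :
    binDigitSum (m + n) ≤ binDigitSum m + binDigitSum n := by
  suffices h : ∀ k m n, m + n ≤ k →
      binDigitSum (m + n) ≤ binDigitSum m + binDigitSum n ∧
        binDigitSum (m + n + 1) ≤ binDigitSum m + binDigitSum n + 1 from
    (h _ m n le_rfl).1
  intro k
  induction k with
  | zero =>
    intro m n h
    obtain ⟨rfl, rfl⟩ : m = 0 ∧ n = 0 := by omega
    decide
  | succ k ih =>
    intro m n h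
    by_cases h0 : m + n = 0
    · obtain ⟨rfl, rfl⟩ : m = 0 ∧ n = 0 := by omega
      decide
    obtain ⟨i, hi | hi⟩ := Nat.even_or_odd' m <;> obtain ⟨j, hj | hj⟩ := Nat.even_or_odd' n <;>
      subst hi hj <;> have := ih i j (by omega)
    · rw [← mul_add]
      simp only [binDigitSum_two_mul, binDigitSum_two_mul_add_one]
      omega
    · rw [show 2 * i + (2 * j + 1) = 2 * (i + j) + 1 by ring,
        show 2 * (i + j) + 1 + 1 = 2 * (i + j + 1) by ring]
      simp only [binDigitSum_two_mul, binDigitSum_two_mul_add_one]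
      omega
    · rw [show 2 * i + 1 + 2 * j = 2 * (i + j) + 1 by ring,
        show 2 * (i + j) + 1 + 1 = 2 * (i + j + 1) by ring]
      simp only [binDigitSum_two_mul, binDigitSum_two_mul_add_one]
      omega
    · rw [show 2 * i + 1 + (2 * j + 1) = 2 * (i + j + 1) by ring]
      simp only [binDigitSum_two_mul, binDigitSum_two_mul_add_one]
      omega

theorem binDigitSum_sum_le {L : List (ℕ × ℕ)} {c : ℕ} (hL : ∀ p ∈ L, binDigitSum p.2 ≤ c) :
    binDigitSum (L.map fun p => p.2 * 2 ^ p.1).sum ≤ c * L.length := by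
  induction L with
  | nil => simp [binDigitSum]
  | cons p L ih =>
    have h₁ := ih fun q hq => hL q (List.mem_cons_of_mem _ hq)
    have h₂ := hL p List.mem_cons_self
    have h₃ := binDigitSum_add_le (p.2 * 2 ^ p.1) (L.map fun p => p.2 * 2 ^ p.1).sum
    rw [binDigitSum_mul_two_pow] at h₃
    simp only [List.map_cons, List.sum_cons, List.length_cons, mul_add, mul_one]
    omega

theorem two_pow_dvd_sum {b t : ℕ} {L : List (ℕ × ℕ)}
    (hL : ((b, t) :: L).IsChain (fun p q => p.1 ≤ q.1 ∧ (p.1 = q.1 → q.2 < p.2))) :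
    2 ^ b ∣ (L.map fun p => p.2 * 2 ^ p.1).sum := by
  induction L generalizing b t with
  | nil => simp
  | cons p L ih =>
    rw [List.isChain_cons_cons] at hL
    have hpow : 2 ^ b ∣ 2 ^ p.1 := pow_dvd_pow 2 hL.1.1
    rw [List.map_cons, List.sum_cons]
    exact dvd_add (hpow.mul_left _) (hpow.trans (ih hL.2))

/-- A depth-first search, with `fuel` steps, through all ways of completing the reversed partial
tiling `acc` by at most `n` tiles from `{1, 3, 9, 13}` of total size `r * 2 ^ b`, the exponents
being at least `b` and the tiles at exponent `b` smaller than `t`. It returns `true` only if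
every completion equals `target`. -/
def onlyCompletion (target : List (ℕ × ℕ)) :
    (fuel n b r t : ℕ) → (acc : List (ℕ × ℕ)) → Bool
  | 0, _, _, _, _, _ => false
  | fuel + 1, n, b, r, t, acc =>
    if r = 0 then acc.reverse = target
    else if 3 * n < binDigitSum r then true
    else (if r % 2 = 0 then onlyCompletion target fuel n (b + 1) (r / 2) 14 acc else true) &&
      [1, 3, 9, 13].all fun l =>
        if l < t ∧ l ≤ r then onlyCompletion target fuel (n - 1) b (r - l) l ((b, l) :: acc)
        else true

theorem eq_of_onlyCompletion {target : List (ℕ × ℕ)} {fuel n b r t : ℕ}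
    {acc L : List (ℕ × ℕ)} (h : onlyCompletion target fuel n b r t acc = true)
    (hmem : ∀ p ∈ L, p.2 ∈ ({1, 3, 9, 13} : Finset ℕ))
    (hchain : ((b, t) :: L).IsChain (fun p q => p.1 ≤ q.1 ∧ (p.1 = q.1 → q.2 < p.2)))
    (hsum : (L.map fun p => p.2 * 2 ^ p.1).sum = r * 2 ^ b) (hlen : L.length ≤ n) :
    acc.reverse ++ L = target := by
  induction fuel generalizing n b r t acc L with
  | zero => simp [onlyCompletion] at h
  | succ fuel ih =>
    have hweight : binDigitSum r ≤ 3 * L.length := by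
      rw [← binDigitSum_mul_two_pow r b, ← hsum]
      refine binDigitSum_sum_le fun p hp => ?_
      have := hmem p hp
      simp only [Finset.mem_insert, Finset.mem_singleton] at this
      rcases this with h | h | h | h <;> rw [h] <;> decide
    rw [onlyCompletion] at h
    cases L with
    | nil =>
      have hr : r = 0 := by simpa using hsum
      simpa [hr] using h
    | cons p L =>
      obtain ⟨c, l⟩ := p
      have hl := hmem _ List.mem_cons_self
      have hl0 : 0 < l := by
        simp only [Finset.mem_insert, Finset.mem_singleton] at hl
        omega
      have hr : r ≠ 0 := by
        rintro rfl
        simp [hl0.ne'] at hsum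
      rw [if_neg hr, if_neg (by omega), Bool.and_eq_true, List.all_eq_true] at h
      have hchain' := List.isChain_cons_cons.1 hchain
      obtain ⟨⟨hbc, hlt⟩, htail⟩ := hchain'
      simp only at hbc hlt
      rcases hbc.eq_or_lt with rfl | hbc
      · have hle : l ≤ r := by
          refine Nat.le_of_mul_le_mul_right (c := 2 ^ b) ?_ (by positivity)
          rw [← hsum, List.map_cons, List.sum_cons]
          exact Nat.le_add_right _ _
        have hstep := h.2 l (by simpa using hl)
        rw [if_pos ⟨hlt rfl, hle⟩] at hstep
        have := ih hstep (fun q hq => hmem q (List.mem_cons_of_mem _ hq)) htail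
          (by rw [Nat.sub_mul, ← hsum, List.map_cons, List.sum_cons, Nat.add_sub_cancel_left])
          (by simp only [List.length_cons] at hlen; omega)
        simpa using this
      · have hchain₁ : ((b + 1, 14) :: (c, l) :: L).IsChain
            (fun p q => p.1 ≤ q.1 ∧ (p.1 = q.1 → q.2 < p.2)) := by
          refine List.isChain_cons_cons.2 ⟨⟨hbc, fun _ => ?_⟩, htail⟩
          simp only [Finset.mem_insert, Finset.mem_singleton] at hl ⊢
          omega
        have hdvd := two_pow_dvd_sum hchain₁
        rw [hsum, pow_succ, mul_comm r] at hdvd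
        obtain ⟨m, rfl⟩ := Nat.dvd_of_mul_dvd_mul_left (by positivity) hdvd
        have hstep := h.1
        rw [if_pos (by omega), Nat.mul_div_cancel_left m two_pos] at hstep
        exact ih hstep hmem hchain₁ (by rw [hsum]; ring) hlen

theorem IsTiling.eq_of_length_le_eight {L : List (ℕ × ℕ)}
    (hL : IsTiling {1, 3, 9, 13} (2 ^ 22 - 4) L) (hlen : L.length ≤ 8) :
    L = [(2, 13), (3, 9), (7, 13), (8, 9), (12, 13), (13, 9), (17, 13), (18, 9)] := by
  have hsearch : onlyCompletion
      [(2, 13), (3, 9), (7, 13), (8, 9), (12, 13), (13, 9), (17, 13), (18, 9)]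
      40 8 0 (2 ^ 22 - 4) 14 [] = true := by decide +kernel
  obtain ⟨hmem, hchain, hsum⟩ := hL
  refine eq_of_onlyCompletion hsearch hmem ?_ (by simpa using hsum) hlen
  cases L with
  | nil => simp
  | cons p L =>
    refine List.isChain_cons_cons.2 ⟨⟨Nat.zero_le _, fun _ => ?_⟩, hchain⟩
    have := hmem p List.mem_cons_self
    simp only [Finset.mem_insert, Finset.mem_singleton] at this ⊢
    omega

theorem isTiling_eight :
    IsTiling {1, 3, 9, 13} (2 ^ 22 - 4)
      [(2, 13), (3, 9), (7, 13), (8, 9), (12, 13), (13, 9), (17, 13), (18, 9)] := by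
  refine ⟨by decide, ?_, by norm_num⟩
  show List.IsChain _ _
  simp

theorem stmt7 :
    (2 ^ 22 - 4 : ℕ) = 9 * 2 ^ 18 + 13 * 2 ^ 17 + 9 * 2 ^ 13 + 13 * 2 ^ 12 +
      9 * 2 ^ 8 + 13 * 2 ^ 7 + 9 * 2 ^ 3 + 13 * 2 ^ 2 ∧
    stilde {1, 3, 9, 13} (2 ^ 22 - 4) = 8 ∧
    Ktilde {1, 3, 9, 13} (2 ^ 22 - 4) =
      {[(2, 13), (3, 9), (7, 13), (8, 9), (12, 13), (13, 9), (17, 13), (18, 9)]} := by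
  have hmin : stilde {1, 3, 9, 13} (2 ^ 22 - 4) = 8 := by
    refine le_antisymm (sInf_le ⟨_, isTiling_eight, rfl⟩) (le_sInf ?_)
    rintro _ ⟨L, hL, rfl⟩
    rcases le_total L.length 8 with h | h
    · rw [hL.eq_of_length_le_eight h]
      rfl
    · exact_mod_cast h
  refine ⟨by norm_num, hmin, Set.eq_singleton_iff_unique_mem.2 ⟨⟨isTiling_eight, ?_⟩, ?_⟩⟩
  · rw [hmin]
    rfl
  · rintro L ⟨hL, hlen⟩
    rw [hmin] at hlen
    exact hL.eq_of_length_le_eight (by exact_mod_cast hlen.le)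
end

section
/- Let S = {1,3,9,13}. Then: (i) for all integers m ≥ 1 and all integers n with 1 ≤ n ≤ 16, s̃(m·2^{n+5}−4, S) ≥ ⌈n/2⌉; (ii) for all integers m ≥ 4, s̃(m·2^{22}−4, S) ≥ 9; and (iii) s̃(2^{22}−4, S) = 8. -/
open scoped BigOperators

theorem binDigitSum_two_mul_add {x : ℕ} (hx : x < 2) (n : ℕ) :
    binDigitSum (2 * n + x) = x + binDigitSum n := by
  unfold binDigitSum
  rcases Nat.eq_zero_or_pos (2 * n + x) with h | h
  · obtain ⟨rfl, rfl⟩ : n = 0 ∧ x = 0 := by omega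
    simp
  · rw [Nat.digits_def' (by norm_num) h, List.sum_cons]
    congr 1
    · omega
    · congr 2
      omega

theorem binDigitSum_succ_le (n : ℕ) : binDigitSum (n + 1) ≤ binDigitSum n + 1 := by
  induction n using Nat.strong_induction_on with
  | _ n ih =>
    rcases Nat.even_or_odd' n with ⟨k, rfl | rfl⟩
    · have h := binDigitSum_two_mul_add (x := 0) (by norm_num) k
      rw [binDigitSum_two_mul_add (x := 1) (by norm_num) k]
      simp only [add_zero] at h
      omega
    · have h := binDigitSum_two_mul_add (x := 0) (by norm_num) (k + 1)
      rw [binDigitSum_two_mul_add (x := 1) (by norm_num) k,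
        show 2 * k + 1 + 1 = 2 * (k + 1) + 0 by ring, h]
      have := ih k (by omega)
      omega

theorem binDigitSum_add_two_pow_le (b n : ℕ) :
    binDigitSum (n + 2 ^ b) ≤ binDigitSum n + 1 := by
  induction b generalizing n with
  | zero => simpa using binDigitSum_succ_le n
  | succ b ih =>
    have hx : n % 2 < 2 := Nat.mod_lt _ (by norm_num)
    have h₁ := binDigitSum_two_mul_add hx (n / 2)
    have h₂ := binDigitSum_two_mul_add hx (n / 2 + 2 ^ b)
    rw [show 2 * (n / 2) + n % 2 = n by omega] at h₁
    rw [show 2 * (n / 2 + 2 ^ b) + n % 2 = n + 2 ^ (b + 1) by rw [pow_succ]; omega] at h₂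
    have := ih (n / 2)
    omega

theorem binDigitSum_pos {n : ℕ} (hn : 0 < n) : 0 < binDigitSum n := by
  induction n using Nat.strong_induction_on with
  | _ n ih =>
    have h := binDigitSum_two_mul_add (Nat.mod_lt n (by norm_num : 2 > 0)) (n / 2)
    rw [show 2 * (n / 2) + n % 2 = n by omega] at h
    by_cases h0 : n % 2 = 0
    · have := ih (n / 2) (by omega) (by omega)
      omega
    · omega

/-- Grouping a tiling by tile size: the positions of each tile are recorded by one number. -/
theorem exists_binDigitSum_le_length (L : List (ℕ × ℕ))
    (hL : ∀ p ∈ L, p.2 ∈ ({1, 3, 9, 13} : Finset ℕ)) :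
    ∃ a b c d : ℕ, (L.map fun p => p.2 * 2 ^ p.1).sum = a + 3 * b + 9 * c + 13 * d ∧
      binDigitSum a + binDigitSum b + binDigitSum c + binDigitSum d ≤ L.length := by
  induction L with
  | nil => exact ⟨0, 0, 0, 0, by simp, by simp [binDigitSum]⟩
  | cons p L ih =>
    obtain ⟨a, b, c, d, hsum, hlen⟩ := ih fun q hq => hL q (List.mem_cons_of_mem _ hq)
    have hp := hL p List.mem_cons_self
    simp only [Finset.mem_insert, Finset.mem_singleton] at hp
    simp only [List.map_cons, List.sum_cons, List.length_cons, hsum]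
    have ha := binDigitSum_add_two_pow_le p.1 a
    have hb := binDigitSum_add_two_pow_le p.1 b
    have hc := binDigitSum_add_two_pow_le p.1 c
    have hd := binDigitSum_add_two_pow_le p.1 d
    rcases hp with h | h | h | h <;> rw [h]
    · exact ⟨a + 2 ^ p.1, b, c, d, by ring, by omega⟩
    · exact ⟨a, b + 2 ^ p.1, c, d, by ring, by omega⟩
    · exact ⟨a, b, c + 2 ^ p.1, d, by ring, by omega⟩
    · exact ⟨a, b, c, d + 2 ^ p.1, by ring, by omega⟩

/-- The total size and the number of tiles of each subset of `{1, 3, 9, 13}`. -/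
def tileChoices : List (ℕ × ℕ) :=
  (List.range 2).flatMap fun x => (List.range 2).flatMap fun y =>
    (List.range 2).flatMap fun z => (List.range 2).map fun w =>
      (x + 3 * y + 9 * z + 13 * w, x + y + z + w)

theorem mem_tileChoices {x y z w : ℕ} (hx : x < 2) (hy : y < 2) (hz : z < 2) (hw : w < 2) :
    (x + 3 * y + 9 * z + 13 * w, x + y + z + w) ∈ tileChoices := by
  simp only [tileChoices, List.mem_flatMap, List.mem_map, List.mem_range]
  exact ⟨x, hx, y, hy, z, hz, w, hw, rfl⟩

/-- One step of the dynamic program: the least number of tiles needed from carry `q` on,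
where `T` lists lower bounds (by carry) for the following positions. The values are capped. -/
def carryStep (T : List ℕ) : List ℕ :=
  (List.range 27).map fun q =>
    ((tileChoices.filter fun p => (q + p.1) % 2 = 0).map
      fun p => p.2 + T.getD ((q + p.1) / 2) 0).foldr min 40

theorem foldr_min_le_s8 {l : List ℕ} {x : ℕ} (hx : x ∈ l) (e : ℕ) : l.foldr min e ≤ x := by
  induction l with
  | nil => simp at hx
  | cons y l ih =>
    rcases List.mem_cons.1 hx with rfl | h
    · exact min_le_left _ _
    · exact (min_le_right _ _).trans (ih h)

theorem carryStep_getD_le (T : List ℕ) {q : ℕ} {p : ℕ × ℕ} (hp : p ∈ tileChoices)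
    (hq : (q + p.1) % 2 = 0) :
    (carryStep T).getD q 0 ≤ p.2 + T.getD ((q + p.1) / 2) 0 := by
  by_cases h : q < 27
  · rw [List.getD_eq_getElem _ _ (by simpa [carryStep] using h)]
    simp only [carryStep, List.getElem_map, List.getElem_range]
    exact foldr_min_le_s8 (List.mem_map.2 ⟨p, List.mem_filter.2 ⟨hp, by simpa using hq⟩, rfl⟩) _
  · rw [List.getD_eq_default _ _ (by simpa [carryStep] using h)]
    exact Nat.zero_le _

/-- `T` bounds from below, by carry, the number of tiles completing the carry to `r`. -/
def IsCarryBound (T : List ℕ) (r : ℕ) : Prop :=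
  ∀ q a b c d : ℕ, a + 3 * b + 9 * c + 13 * d + q = r →
    T.getD q 0 ≤ binDigitSum a + binDigitSum b + binDigitSum c + binDigitSum d

theorem IsCarryBound.carryStep {T : List ℕ} {r : ℕ} (hT : IsCarryBound T r) :
    IsCarryBound (carryStep T) (2 * r) := by
  intro q a b c d h
  have hlt (n : ℕ) : n % 2 < 2 := Nat.mod_lt n (by norm_num)
  have hdig (n : ℕ) : binDigitSum n = n % 2 + binDigitSum (n / 2) := by
    rw [← binDigitSum_two_mul_add (hlt n), Nat.div_add_mod]
  have hle := carryStep_getD_le T (q := q) (mem_tileChoices (hlt a) (hlt b) (hlt c) (hlt d))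
    (by dsimp only; omega)
  have hrec := hT ((q + (a % 2 + 3 * (b % 2) + 9 * (c % 2) + 13 * (d % 2))) / 2)
    (a / 2) (b / 2) (c / 2) (d / 2) (by omega)
  rw [hdig a, hdig b, hdig c, hdig d]
  dsimp only at hle
  omega

theorem IsCarryBound.iterate {T : List ℕ} {r : ℕ} (hT : IsCarryBound T r) (k : ℕ) :
    IsCarryBound (_root_.carryStep^[k] T) (r * 2 ^ k) := by
  induction k with
  | zero => simpa using hT
  | succ k ih =>
    rw [Function.iterate_succ_apply', pow_succ, ← mul_assoc, mul_comm _ 2]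
    exact ih.carryStep

theorem isCarryBound_nil (r : ℕ) : IsCarryBound [] r := by
  intro q a b c d _
  simp

theorem isCarryBound_ones {r : ℕ} (hr : 4 ≤ r) : IsCarryBound [1, 1, 1, 1] r := by
  intro q a b c d h
  by_cases hq : q < 4
  · have hone : List.getD [1, 1, 1, 1] q 0 = 1 := by interval_cases q <;> rfl
    rw [hone]
    rcases (by omega : 0 < a ∨ 0 < b ∨ 0 < c ∨ 0 < d) with h | h | h | h <;>
      have := binDigitSum_pos h <;> omega
  · rw [List.getD_eq_default _ _ (by simpa using hq)]
    exact Nat.zero_le _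

theorem IsCarryBound.le_stilde {T : List ℕ} {q r t : ℕ} (hT : IsCarryBound T r) (hq : q ≤ r)
    (ht : t ≤ T.getD q 0) : (t : ℕ∞) ≤ stilde {1, 3, 9, 13} (r - q) := by
  refine le_sInf ?_
  rintro _ ⟨L, ⟨hmem, -, hsum⟩, rfl⟩
  obtain ⟨a, b, c, d, hL, hlen⟩ := exists_binDigitSum_le_length L hmem
  have := hT q a b c d (by omega)
  exact_mod_cast ht.trans (this.trans hlen)

theorem half_le_carryStep_iterate_nil :
    ∀ n < 17, (n + 1) / 2 ≤ (carryStep^[n + 5] []).getD 4 0 := by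
  decide +kernel

theorem nine_le_carryStep_iterate_ones :
    9 ≤ (carryStep^[22] [1, 1, 1, 1]).getD 4 0 := by
  decide +kernel

theorem half_le_stilde {m n : ℕ} (hm : 1 ≤ m) (hn : n ≤ 16) :
    (((n + 1) / 2 : ℕ) : ℕ∞) ≤ stilde {1, 3, 9, 13} (m * 2 ^ (n + 5) - 4) := by
  refine ((isCarryBound_nil m).iterate (n + 5)).le_stilde ?_
    (half_le_carryStep_iterate_nil n (by omega))
  have := Nat.one_le_two_pow (n := n)
  rw [pow_add]
  nlinarith

theorem stmt8 :
    (∀ m n : ℕ, 1 ≤ m → 1 ≤ n → n ≤ 16 →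
      (((n + 1) / 2 : ℕ) : ℕ∞) ≤ stilde {1, 3, 9, 13} (m * 2 ^ (n + 5) - 4)) ∧
    (∀ m : ℕ, 4 ≤ m → (9 : ℕ∞) ≤ stilde {1, 3, 9, 13} (m * 2 ^ 22 - 4)) ∧
    stilde {1, 3, 9, 13} (2 ^ 22 - 4) = 8 := by
  refine ⟨fun m n hm _ hn => half_le_stilde hm hn, fun m hm => ?_, le_antisymm ?_ ?_⟩
  · exact ((isCarryBound_ones hm).iterate 22).le_stilde (by omega)
      nine_le_carryStep_iterate_ones
  · refine sInf_le ⟨[(2, 13), (3, 9), (7, 13), (8, 9), (12, 13), (13, 9), (17, 13), (18, 9)],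
      ⟨?_, ?_, ?_⟩, rfl⟩
    · decide
    · simp [List.Chain']
    · norm_num
  · exact half_le_stilde (m := 2) (n := 16) (by norm_num) le_rfl
end

section
/- Let S = {3,5,9,13,17} and r = 2^{26}−4. Then s̃(r,S) = 9 and the unique r-tiling sequence with tiles in S of length 9 is (2,13),(3,17),(6,13),(10,13),(11,17),(14,13),(18,13),(19,17),(22,13); that is, 2^{26}−4 = 13·2^{22}+17·2^{19}+13·2^{18}+13·2^{14}+17·2^{11}+13·2^{10}+13·2^{6}+17·2^{3}+13·2^{2} and K̃(r,S) consists of exactly this one sequence. -/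
open scoped BigOperators

theorem binDigitSum_eq_mod_add (n : ℕ) : binDigitSum n = n % 2 + binDigitSum (n / 2) := by
  rcases Nat.eq_zero_or_pos n with rfl | hn
  · simp [binDigitSum]
  · simp [binDigitSum, Nat.digits_def' one_lt_two hn]

/-- The sum of the `f` lowest binary digits of `n`, by structural recursion on `f`. -/
def lowDigitSum : ℕ → ℕ → ℕ
  | 0, _ => 0
  | _ + 1, 0 => 0
  | f + 1, n + 1 => (n + 1) % 2 + lowDigitSum f ((n + 1) / 2)

theorem lowDigitSum_le_binDigitSum (f n : ℕ) : lowDigitSum f n ≤ binDigitSum n := by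
  induction f generalizing n with
  | zero => exact Nat.zero_le _
  | succ f ih =>
    cases n with
    | zero => exact Nat.zero_le _
    | succ n =>
      rw [lowDigitSum, binDigitSum_eq_mod_add]
      exact Nat.add_le_add_left (ih _) _

theorem binDigitSum_add_add_le (a b c : ℕ) (hc : c ≤ 1) :
    binDigitSum (a + b + c) ≤ binDigitSum a + binDigitSum b + c := by
  induction hn : a + b using Nat.strong_induction_on generalizing a b c with
  | _ n ih =>
    rcases Nat.eq_zero_or_pos n with rfl | hpos
    · obtain ⟨rfl, rfl⟩ : a = 0 ∧ b = 0 := by omega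
      interval_cases c <;> simp [binDigitSum]
    · have key := ih (a / 2 + b / 2) (by omega) (a / 2) (b / 2)
        ((a % 2 + b % 2 + c) / 2) (by omega) rfl
      have hdiv : (n + c) / 2 = a / 2 + b / 2 + (a % 2 + b % 2 + c) / 2 := by omega
      rw [binDigitSum_eq_mod_add (n + c), binDigitSum_eq_mod_add a, binDigitSum_eq_mod_add b, hdiv]
      omega

theorem binDigitSum_add_le_s10 (a b : ℕ) :
    binDigitSum (a + b) ≤ binDigitSum a + binDigitSum b :=
  binDigitSum_add_add_le a b 0 zero_le_one

/-- The value `∑ ℓ_i·2^{b_i}` of a list of pairs `(b_i, ℓ_i)`. -/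
def tilingSum (L : List (ℕ × ℕ)) : ℕ := (L.map fun p => p.2 * 2 ^ p.1).sum

theorem tilingSum_cons (p : ℕ × ℕ) (L : List (ℕ × ℕ)) :
    tilingSum (p :: L) = p.2 * 2 ^ p.1 + tilingSum L := by
  simp [tilingSum]

theorem binDigitSum_tilingSum_le (L : List (ℕ × ℕ)) (d : ℕ)
    (hL : ∀ p ∈ L, binDigitSum p.2 ≤ d) : binDigitSum (tilingSum L) ≤ d * L.length := by
  induction L with
  | nil => simp [tilingSum, binDigitSum]
  | cons p L ih =>
    have h := binDigitSum_add_le_s10 (p.2 * 2 ^ p.1) (tilingSum L)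
    rw [binDigitSum_mul_two_pow] at h
    have hp := hL p List.mem_cons_self
    have ht := ih fun q hq => hL q (List.mem_cons_of_mem _ hq)
    rw [tilingSum_cons, List.length_cons, mul_add, mul_one]
    omega

/-- The order imposed on consecutive members of a tiling sequence. -/
def TileRel (p q : ℕ × ℕ) : Prop := p.1 ≤ q.1 ∧ (p.1 = q.1 → q.2 < p.2)

theorem two_pow_dvd_tilingSum (L : List (ℕ × ℕ)) (p : ℕ × ℕ)
    (h : List.IsChain TileRel (p :: L)) : 2 ^ p.1 ∣ tilingSum L := by
  induction L generalizing p with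
  | nil => simp [tilingSum]
  | cons q L ih =>
    rw [List.isChain_cons_cons] at h
    have hpq : 2 ^ p.1 ∣ 2 ^ q.1 := pow_dvd_pow 2 h.1.1
    rw [tilingSum_cons]
    exact dvd_add (hpq.mul_left _) (hpq.trans (ih q h.2))

/-- Exhaustive search, within the given fuel, certifying that every continuation of the partial
tiling `acc` by at most `k` tiles of total value `m·2^b`, placed at levels at least `b` and of size
less than `t` at level `b`, completes `acc` to `target`. Branches are cut by comparing binary digit
sums, each tile having digit sum at most `3`. -/
def searchTilings (target : List (ℕ × ℕ)) :
    ℕ → ℕ → ℕ → ℕ → ℕ → List (ℕ × ℕ) → Bool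
  | 0, _, _, _, _, _ => false
  | _ + 1, _, _, 0, _, acc => decide (acc = target)
  | fuel + 1, b, t, m + 1, k, acc =>
    decide (3 * k < lowDigitSum 26 (m + 1)) ||
    ((decide ((m + 1) % 2 = 1) || searchTilings target fuel (b + 1) 18 ((m + 1) / 2) k acc) &&
      [3, 5, 9, 13, 17].all fun l =>
        decide (t ≤ l) || decide (m + 1 < l) ||
          searchTilings target fuel b l (m + 1 - l) (k - 1) (acc ++ [(b, l)]))

theorem append_eq_of_searchTilings (target : List (ℕ × ℕ)) (fuel b t m k : ℕ)
    (acc L : List (ℕ × ℕ)) (hsearch : searchTilings target fuel b t m k acc = true)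
    (hmem : ∀ p ∈ L, p.2 ∈ [3, 5, 9, 13, 17]) (hchain : List.IsChain TileRel ((b, t) :: L))
    (hsum : tilingSum L = m * 2 ^ b) (hlen : L.length ≤ k) : acc ++ L = target := by
  induction fuel generalizing b t m k acc L with
  | zero => simp [searchTilings] at hsearch
  | succ fuel ih =>
    have hdigits : lowDigitSum 26 m ≤ 3 * k := by
      have h := binDigitSum_tilingSum_le L 3 fun p hp => by
        have := hmem p hp
        simp only [List.mem_cons, List.not_mem_nil, or_false] at this
        rcases this with h | h | h | h | h <;> simp [h, binDigitSum]
      rw [hsum, binDigitSum_mul_two_pow] at h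
      have := lowDigitSum_le_binDigitSum 26 m
      omega
    have hb : 0 < 2 ^ b := by positivity
    cases L with
    | nil =>
      have hm : m = 0 := by
        have : m * 2 ^ b = 0 := by rw [← hsum]; rfl
        simpa using this
      subst hm
      simpa [searchTilings] using hsearch
    | cons p L =>
      obtain ⟨b', l⟩ := p
      have hl := hmem (b', l) List.mem_cons_self
      have hl_bounds : 0 < l ∧ l < 18 := by
        simp only [List.mem_cons, List.not_mem_nil, or_false] at hl
        omega
      have hm : m ≠ 0 := by
        rintro rfl
        rw [tilingSum_cons] at hsum
        have : 0 < l * 2 ^ b' := Nat.mul_pos hl_bounds.1 (by positivity)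
        simp only [zero_mul] at hsum
        omega
      obtain ⟨m, rfl⟩ := Nat.exists_eq_add_one_of_ne_zero hm
      rw [searchTilings, Bool.or_eq_true, decide_eq_true_eq, or_iff_right (by omega),
        Bool.and_eq_true, List.all_eq_true] at hsearch
      obtain ⟨hskip, htake⟩ := hsearch
      rw [List.isChain_cons_cons] at hchain
      obtain ⟨⟨hle, hlt⟩, htail⟩ := hchain
      dsimp only at hle hlt
      rcases hle.eq_or_lt with rfl | hbb
      · have hdvd := two_pow_dvd_tilingSum L _ htail
        obtain ⟨c, hc⟩ := hdvd
        dsimp only at hc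
        have hmc : m + 1 = l + c := by
          rw [tilingSum_cons, hc] at hsum
          dsimp only at hsum
          exact Nat.eq_of_mul_eq_mul_right hb (by rw [← hsum]; ring)
        have hstep := htake l hl
        simp only [Bool.or_eq_true, decide_eq_true_eq] at hstep
        have hlt' := hlt rfl
        rw [or_iff_right (by omega)] at hstep
        rw [List.length_cons] at hlen
        have := ih b l (m + 1 - l) (k - 1) (acc ++ [(b, l)]) L hstep
          (fun q hq => hmem q (List.mem_cons_of_mem _ hq)) htail
          (by rw [hc, hmc, Nat.add_sub_cancel_left, mul_comm]) (by omega)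
        simpa using this
      · have hchain' : List.IsChain TileRel ((b + 1, 18) :: (b', l) :: L) :=
          List.isChain_cons_cons.2 ⟨⟨hbb, fun _ => hl_bounds.2⟩, htail⟩
        obtain ⟨c, hc⟩ := two_pow_dvd_tilingSum _ _ hchain'
        have hmc : m + 1 = 2 * c := by
          rw [hsum] at hc
          exact Nat.eq_of_mul_eq_mul_right hb (by rw [hc]; ring)
        rw [Bool.or_eq_true, decide_eq_true_eq, or_iff_right (by omega)] at hskip
        exact ih (b + 1) 18 ((m + 1) / 2) k acc _ hskip hmem hchain'
          (by rw [hc, hmc, Nat.mul_div_cancel_left _ two_pos, mul_comm]) hlen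

/-- The nine-tile tiling sequence of `2 ^ 26 - 4`. -/
def nineTiling : List (ℕ × ℕ) :=
  [(2, 13), (3, 17), (6, 13), (10, 13), (11, 17), (14, 13), (18, 13), (19, 17), (22, 13)]

theorem searchTilings_nineTiling :
    searchTilings nineTiling 100 0 18 (2 ^ 26 - 4) 9 [] = true := by
  decide +kernel

theorem isTiling_nineTiling : IsTiling {3, 5, 9, 13, 17} (2 ^ 26 - 4) nineTiling := by
  refine ⟨by decide, ?_, by decide⟩
  change List.IsChain _ _
  decide

theorem eq_nineTiling_of_isTiling (L : List (ℕ × ℕ))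
    (hL : IsTiling {3, 5, 9, 13, 17} (2 ^ 26 - 4) L) (hlen : L.length ≤ 9) : L = nineTiling := by
  obtain ⟨hmem, hchain, hsum⟩ := hL
  have hmem' : ∀ p ∈ L, p.2 ∈ [3, 5, 9, 13, 17] := fun p hp => by simpa using hmem p hp
  have hchain' : List.IsChain TileRel ((0, 18) :: L) := by
    refine List.IsChain.cons hchain fun p hp => ⟨Nat.zero_le _, fun _ => ?_⟩
    have := hmem' p (List.mem_of_mem_head? hp)
    simp only [List.mem_cons, List.not_mem_nil, or_false] at this
    dsimp only
    omega
  simpa using append_eq_of_searchTilings nineTiling 100 0 18 _ 9 [] L searchTilings_nineTiling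
    hmem' hchain' (by simpa [tilingSum] using hsum) hlen

theorem stilde_eq_nine : stilde {3, 5, 9, 13, 17} (2 ^ 26 - 4) = 9 := by
  refine le_antisymm (sInf_le ⟨nineTiling, isTiling_nineTiling, rfl⟩) (le_sInf ?_)
  rintro _ ⟨L, hL, rfl⟩
  by_contra! hlt
  have hlt' : L.length < 9 := by exact_mod_cast hlt
  have := congrArg List.length (eq_nineTiling_of_isTiling L hL hlt'.le)
  simp [nineTiling] at this
  omega

theorem stmt10 :
    (2 ^ 26 - 4 : ℕ) = 13 * 2 ^ 22 + 17 * 2 ^ 19 + 13 * 2 ^ 18 + 13 * 2 ^ 14 +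
      17 * 2 ^ 11 + 13 * 2 ^ 10 + 13 * 2 ^ 6 + 17 * 2 ^ 3 + 13 * 2 ^ 2 ∧
    stilde {3, 5, 9, 13, 17} (2 ^ 26 - 4) = 9 ∧
    Ktilde {3, 5, 9, 13, 17} (2 ^ 26 - 4) =
      {[(2, 13), (3, 17), (6, 13), (10, 13), (11, 17), (14, 13), (18, 13), (19, 17),
        (22, 13)]} := by
  refine ⟨by norm_num, stilde_eq_nine, Set.ext fun L => ?_⟩
  rw [Ktilde, Set.mem_ofPred_eq, stilde_eq_nine, Set.mem_singleton_iff]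
  constructor
  · rintro ⟨hL, hlen⟩
    have hlen' : L.length = 9 := by exact_mod_cast hlen
    exact eq_nineTiling_of_isTiling L hL hlen'.le
  · rintro rfl
    exact ⟨isTiling_nineTiling, rfl⟩
end

section
/- Let S = {3,5,9,11,17} and r = 2^{26}−4. Then s̃(r,S) = 9 and the unique r-tiling sequence with tiles in S of length 9 is (2,11),(4,17),(6,11),(10,11),(12,17),(14,11),(18,11),(20,17),(22,11); that is, 2^{26}−4 = 11·2^{22}+17·2^{20}+11·2^{18}+11·2^{14}+17·2^{12}+11·2^{10}+11·2^{6}+17·2^{4}+11·2^{2} and K̃(r,S) consists of exactly this one sequence. -/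
open scoped BigOperators

/-- A tiling splits into its tiles at position `0`, listed in strictly decreasing order, and a
tiling of half of the remainder shifted by one position. -/
theorem IsTiling.exists_split {S : Finset ℕ} {r : ℕ} {L : List (ℕ × ℕ)} (h : IsTiling S r L) :
    ∃ (T : List ℕ) (M : List (ℕ × ℕ)) (m : ℕ), (∀ l ∈ T, l ∈ S) ∧ T.Pairwise (· > ·) ∧
      IsTiling S m M ∧ L = T.map (fun l => (0, l)) ++ M.map (fun p => (p.1 + 1, p.2)) ∧
      r = T.sum + 2 * m := by
  induction L generalizing r with
  | nil =>
    obtain ⟨-, -, rfl⟩ := h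
    exact ⟨[], [], 0, by simp, by simp, ⟨by simp, List.isChain_nil, rfl⟩, rfl, rfl⟩
  | cons p L ih =>
    obtain ⟨hS, hC, hr⟩ := h
    have hC' := List.isChain_cons.1 hC
    obtain ⟨T, M, m, hT, hTP, hM, hL, hsum⟩ :=
      ih ⟨fun q hq => hS q (List.mem_cons_of_mem _ hq), hC'.2, rfl⟩
    obtain ⟨b, l⟩ := p
    have hl : l ∈ S := hS (b, l) List.mem_cons_self
    rw [List.map_cons, List.sum_cons, hsum] at hr
    cases b with
    | zero =>
      refine ⟨l :: T, M, m, ?_, ?_, hM, by simp [hL], ?_⟩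
      · simpa [hl] using hT
      · rw [← List.isChain_iff_pairwise] at hTP ⊢
        refine List.isChain_cons.2 ⟨fun x hx => ?_, hTP⟩
        refine (hC'.1 (0, x) ?_).2 rfl
        cases T <;> simp_all
      · simp at hr ⊢
        omega
    | succ b =>
      cases T with
      | cons t T =>
        have := (hC'.1 (0, t) (by simp [hL])).1
        simp at this
      | nil =>
        refine ⟨[], (b, l) :: M, l * 2 ^ b + m, by simp, by simp,
          ⟨?_, List.isChain_cons.2 ⟨fun q hq => ?_, hM.2.1⟩, ?_⟩, by simp [hL], ?_⟩
        · exact List.forall_mem_cons.2 ⟨hl, hM.1⟩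
        · have := hC'.1 (q.1 + 1, q.2) (by cases M <;> simp_all)
          simpa using this
        · rw [List.map_cons, List.sum_cons, hM.2.2]
        · simp [pow_succ] at hr ⊢
          rw [← hr]
          ring

theorem List.mem_sublists_of_pairwise_gt {T U : List ℕ} (hT : T.Pairwise (· > ·))
    (hU : U.Pairwise (· > ·)) (h : T ⊆ U) : T ∈ U.sublists :=
  List.mem_sublists.2 <|
    List.sublist_of_subperm_of_pairwise
      (List.subperm_of_subset (hT.imp fun h => (Nat.ne_of_lt h).symm) h) hT hU

/-- A potential on the deficits `c` of the numbers `2 ^ k - 1 - c`: removing the lowest tiles `T`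
and halving lowers it by at least `3 - 8 * T.length`. -/
def deficitPotential (c : ℕ) : ℕ :=
  [0, 3, 2, 6, 4, 5, 5, 9, 3, 7, 5, 9, 5, 9, 9, 13, 5, 7, 5, 11, 9, 9, 9, 13, 5, 9, 9, 13, 9, 13,
    9, 17, 5, 9, 7, 11, 9, 9, 9, 15, 5, 13, 9, 13, 9, 13].getD c 0

theorem deficitPotential_step : ∀ c < 46, ∀ T ∈ [17, 11, 9, 5, 3].sublists, (c + T.sum) % 2 = 1 →
    (c + T.sum) / 2 < 46 ∧
      3 + deficitPotential ((c + T.sum) / 2) ≤ 8 * T.length + deficitPotential c := by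
  decide +kernel

theorem eq_of_deficitPotential_step_eq : ∀ c < 46, ∀ T ∈ [17, 11, 9, 5, 3].sublists,
    (c + T.sum) % 2 = 1 →
    3 + deficitPotential ((c + T.sum) / 2) = 8 * T.length + deficitPotential c →
    ∀ T' ∈ [17, 11, 9, 5, 3].sublists, (c + T'.sum) % 2 = 1 →
    3 + deficitPotential ((c + T'.sum) / 2) = 8 * T'.length + deficitPotential c → T = T' := by
  decide +kernel

/-- Splitting off the lowest tiles `T` of a tiling of `2 ^ (k + 1) - 1 - c` leaves a tiling of
`2 ^ k - 1 - (c + T.sum) / 2`. -/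
theorem IsTiling.exists_deficit_split {c k r : ℕ} {L : List (ℕ × ℕ)}
    (h : IsTiling {3, 5, 9, 11, 17} r L) (hr : r + c + 1 = 2 ^ (k + 1)) :
    ∃ (T : List ℕ) (M : List (ℕ × ℕ)) (m : ℕ), T ∈ [17, 11, 9, 5, 3].sublists ∧
      (c + T.sum) % 2 = 1 ∧ IsTiling {3, 5, 9, 11, 17} m M ∧
      m + (c + T.sum) / 2 + 1 = 2 ^ k ∧ L.length = T.length + M.length ∧
      L = T.map (fun l => (0, l)) ++ M.map (fun p => (p.1 + 1, p.2)) := by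
  obtain ⟨T, M, m, hT, hTP, hM, rfl, rfl⟩ := h.exists_split
  rw [pow_succ] at hr
  refine ⟨T, M, m, List.mem_sublists_of_pairwise_gt hTP (by decide) fun l hl => ?_, by omega, hM,
    by omega, by simp, rfl⟩
  have := hT l hl
  simp at this ⊢
  tauto

theorem IsTiling.three_mul_le {c k r : ℕ} {L : List (ℕ × ℕ)} (hc : c < 46)
    (h : IsTiling {3, 5, 9, 11, 17} r L) (hr : r + c + 1 = 2 ^ k) :
    3 * k ≤ 8 * L.length + deficitPotential c := by
  induction k generalizing c r L with
  | zero => simp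
  | succ k ih =>
    obtain ⟨T, M, m, hT, hodd, hM, hm, hlen, -⟩ := h.exists_deficit_split hr
    obtain ⟨hc', hstep⟩ := deficitPotential_step c hc T hT hodd
    have := ih hc' hM hm
    omega

theorem IsTiling.eq_nil_of_zero {S : Finset ℕ} (hS : 0 ∉ S) {L : List (ℕ × ℕ)}
    (h : IsTiling S 0 L) : L = [] := by
  refine List.eq_nil_iff_forall_not_mem.2 fun p hp => hS ?_
  have := List.sum_eq_zero_iff.1 h.2.2 _ (List.mem_map_of_mem hp)
  have h0 : p.2 = 0 := by simpa using this
  exact h0 ▸ h.1 p hp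

theorem IsTiling.eq_of_three_mul_eq {c k r : ℕ} {L L' : List (ℕ × ℕ)} (hc : c < 46)
    (h : IsTiling {3, 5, 9, 11, 17} r L) (h' : IsTiling {3, 5, 9, 11, 17} r L')
    (hr : r + c + 1 = 2 ^ k) (hL : 3 * k = 8 * L.length + deficitPotential c)
    (hL' : 3 * k = 8 * L'.length + deficitPotential c) : L = L' := by
  induction k generalizing c r L L' with
  | zero =>
    obtain rfl : r = 0 := by simp at hr; omega
    rw [h.eq_nil_of_zero (by decide), h'.eq_nil_of_zero (by decide)]
  | succ k ih =>
    obtain ⟨T, M, m, hT, hodd, hM, hm, hlen, rfl⟩ := h.exists_deficit_split hr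
    obtain ⟨T', M', m', hT', hodd', hM', hm', hlen', rfl⟩ := h'.exists_deficit_split hr
    obtain ⟨hc₁, hstep⟩ := deficitPotential_step c hc T hT hodd
    obtain ⟨hc₁', hstep'⟩ := deficitPotential_step c hc T' hT' hodd'
    have hle := hM.three_mul_le hc₁ hm
    have hle' := hM'.three_mul_le hc₁' hm'
    obtain rfl := eq_of_deficitPotential_step_eq c hc T hT hodd (by omega) T' hT' hodd' (by omega)
    obtain rfl : m = m' := by omega
    rw [ih hc₁ hM hM' hm (by omega) (by omega)]

theorem stmt11 :
    (2 ^ 26 - 4 : ℕ) = 11 * 2 ^ 22 + 17 * 2 ^ 20 + 11 * 2 ^ 18 + 11 * 2 ^ 14 +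
      17 * 2 ^ 12 + 11 * 2 ^ 10 + 11 * 2 ^ 6 + 17 * 2 ^ 4 + 11 * 2 ^ 2 ∧
    stilde {3, 5, 9, 11, 17} (2 ^ 26 - 4) = 9 ∧
    Ktilde {3, 5, 9, 11, 17} (2 ^ 26 - 4) =
      {[(2, 11), (4, 17), (6, 11), (10, 11), (12, 17), (14, 11), (18, 11), (20, 17),
        (22, 11)]} := by
  have hpot : deficitPotential 3 = 6 := rfl
  have hW : IsTiling {3, 5, 9, 11, 17} (2 ^ 26 - 4) [(2, 11), (4, 17), (6, 11), (10, 11),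
      (12, 17), (14, 11), (18, 11), (20, 17), (22, 11)] :=
    ⟨by decide, show List.IsChain _ _ by simp, by norm_num⟩
  have hmin : stilde {3, 5, 9, 11, 17} (2 ^ 26 - 4) = 9 := by
    refine le_antisymm (sInf_le ⟨_, hW, rfl⟩) (le_sInf ?_)
    rintro _ ⟨L, hL, rfl⟩
    have := hL.three_mul_le (c := 3) (k := 26) (by norm_num) (by norm_num)
    have h9 : 9 ≤ L.length := by omega
    exact_mod_cast h9
  refine ⟨by norm_num, hmin, Set.eq_singleton_iff_unique_mem.2 ⟨⟨hW, hmin.symm⟩, ?_⟩⟩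
  rintro L ⟨hL, hlen⟩
  rw [hmin] at hlen
  have h9 : L.length = 9 := by exact_mod_cast hlen
  exact hL.eq_of_three_mul_eq (c := 3) (k := 26) (by norm_num) hW (by norm_num)
    (by rw [h9, hpot]) (by rw [hpot]; rfl)
end

section
/- Let S = {1,3,9,19} and r = 3·2^{33}−8. Then s̃(r,S) = 12 and the unique r-tiling sequence with tiles in S of length 12 is (3,19),(5,3),(8,19),(10,3),(13,19),(15,3),(18,19),(20,3),(23,19),(25,3),(28,19),(30,19); that is, 3·2^{33}−8 = 19·2^{30}+19·2^{28}+3·2^{25}+19·2^{23}+3·2^{20}+19·2^{18}+3·2^{15}+19·2^{13}+3·2^{10}+19·2^{8}+3·2^{5}+19·2^{3} and K̃(r,S) consists of exactly this one sequence. -/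
open scoped BigOperators

/-- The number of ones among the lowest `f` binary digits of `n`. -/
def lowBits : ℕ → ℕ → ℕ
  | 0, _ => 0
  | f + 1, n => n % 2 + lowBits f (n / 2)

theorem lowBits_zero_right (f : ℕ) : lowBits f 0 = 0 := by
  induction f with
  | zero => rfl
  | succ f ih => simp [lowBits, ih]

theorem lowBits_add_one_le (f n : ℕ) : lowBits f (n + 1) ≤ lowBits f n + 1 := by
  induction f generalizing n with
  | zero => simp [lowBits]
  | succ f ih =>
    have h := ih (n / 2)
    simp only [lowBits]
    rcases Nat.mod_two_eq_zero_or_one n with hn | hn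
    · rw [show (n + 1) / 2 = n / 2 by omega]; omega
    · rw [show (n + 1) / 2 = n / 2 + 1 by omega]; omega

theorem lowBits_add_le (f m n : ℕ) : lowBits f (m + n) ≤ lowBits f m + lowBits f n := by
  induction f generalizing m n with
  | zero => simp [lowBits]
  | succ f ih =>
    have h := ih (m / 2) (n / 2)
    have h' := lowBits_add_one_le f (m / 2 + n / 2)
    simp only [lowBits]
    by_cases hc : m % 2 + n % 2 = 2
    · rw [show (m + n) / 2 = m / 2 + n / 2 + 1 by omega]; omega
    · rw [show (m + n) / 2 = m / 2 + n / 2 by omega]; omega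

theorem lowBits_le_succ (f n : ℕ) : lowBits f n ≤ lowBits (f + 1) n := by
  induction f generalizing n with
  | zero => simp [lowBits]
  | succ f ih =>
    rw [lowBits, lowBits]
    exact Nat.add_le_add_left (ih _) _

theorem lowBits_mul_two_pow_le (f n j : ℕ) : lowBits f (n * 2 ^ j) ≤ lowBits f n := by
  induction j with
  | zero => simp
  | succ j ih =>
    refine le_trans ?_ ih
    cases f with
    | zero => simp [lowBits]
    | succ f =>
      rw [pow_succ, ← mul_assoc, lowBits, Nat.mul_mod_left, zero_add,
        Nat.mul_div_cancel _ two_pos]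
      exact lowBits_le_succ _ _

theorem lowBits_tile_le (f : ℕ) {l : ℕ} (hl : l ∈ ({1, 3, 9, 19} : Finset ℕ)) :
    lowBits f l ≤ 3 := by
  have h1 : lowBits f 1 ≤ 1 := by simpa [lowBits_zero_right] using lowBits_add_one_le f 0
  have hp (j : ℕ) : lowBits f (2 ^ j) ≤ 1 := by
    simpa using (lowBits_mul_two_pow_le f 1 j).trans h1
  have h2 := hp 1
  have h8 := hp 3
  have h16 := hp 4
  have h3 := lowBits_add_le f 2 1
  have h9 := lowBits_add_le f 8 1
  have h19 := lowBits_add_le f 16 3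
  norm_num at h2 h8 h16 h3 h9 h19
  simp only [Finset.mem_insert, Finset.mem_singleton] at hl
  rcases hl with rfl | rfl | rfl | rfl <;> omega

theorem lowBits_sum_le (f b : ℕ) (L : List (ℕ × ℕ))
    (hL : ∀ p ∈ L, p.2 ∈ ({1, 3, 9, 19} : Finset ℕ)) :
    lowBits f (L.map fun p => p.2 * 2 ^ (p.1 - b)).sum ≤ 3 * L.length := by
  induction L with
  | nil => simp [lowBits_zero_right]
  | cons p L ih =>
    have hL' := List.forall_mem_cons.1 hL
    have h := ih hL'.2
    have hp := (lowBits_mul_two_pow_le f p.2 (p.1 - b)).trans (lowBits_tile_le f hL'.1)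
    have ha := lowBits_add_le f (p.2 * 2 ^ (p.1 - b)) (L.map fun p => p.2 * 2 ^ (p.1 - b)).sum
    simp only [List.map_cons, List.sum_cons, List.length_cons]
    omega

/-- All lists of at most `k` tiles which may follow the tile `(b, m)` in a tiling sequence and
which sum to `n * 2 ^ b`, provided that the fuel `f` suffices. Branches in which `n` has more than
`3 * k` binary digits equal to one are cut off. -/
def completions : (f n k b m : ℕ) → List (List (ℕ × ℕ))
  | 0, _, _, _, _ => []
  | f + 1, n, k, b, m =>
    match n with
    | 0 => [[]]
    | n' + 1 =>
      bif Nat.ble (lowBits 36 (n' + 1)) (3 * k) then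
        (bif Nat.beq (n' % 2) 1 then completions f ((n' + 1) / 2) k (b + 1) 20 else []) ++
        match k with
        | 0 => []
        | k + 1 => [1, 3, 9, 19].flatMap fun l =>
          bif Nat.ble (l + 1) m && Nat.ble l (n' + 1) then
            (completions f (n' + 1 - l) k b l).map ((b, l) :: ·)
          else []
      else []

theorem mem_completions {f n k b m a : ℕ} {L : List (ℕ × ℕ)} (hn : n < 2 ^ a) (hf : a + k < f)
    (hS : ∀ p ∈ L, p.2 ∈ ({1, 3, 9, 19} : Finset ℕ))
    (hc : List.IsChain (fun p q : ℕ × ℕ => p.1 ≤ q.1 ∧ (p.1 = q.1 → q.2 < p.2)) ((b, m) :: L))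
    (hsum : (L.map fun p => p.2 * 2 ^ (p.1 - b)).sum = n) (hk : L.length ≤ k) :
    L ∈ completions f n k b m := by
  induction f generalizing n k b m a L with
  | zero => omega
  | succ f ih =>
    match n, L with
    | 0, [] => simp [completions]
    | 0, p :: L =>
      have hp := (List.forall_mem_cons.1 hS).1
      simp only [List.map_cons, List.sum_cons, Nat.add_eq_zero_iff, mul_eq_zero] at hsum
      rcases hsum.1 with h | h
      · simp [h] at hp
      · simp at h
    | n' + 1, [] => simp at hsum
    | n' + 1, (c, l) :: L =>
      have hbits := lowBits_sum_le 36 b _ hS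
      rw [hsum] at hbits
      have hle : Nat.ble (lowBits 36 (n' + 1)) (3 * k) = true := by
        rw [Nat.ble_eq]; omega
      obtain ⟨hl, hS'⟩ := List.forall_mem_cons.1 hS
      obtain ⟨⟨hbc, hlm⟩, hc'⟩ := List.isChain_cons_cons.1 hc
      simp only [] at hbc hlm hl
      rw [completions.eq_def]
      simp only [hle, cond_true, List.mem_append]
      rcases hbc.lt_or_eq with hlt | rfl
      · left
        have hge : ∀ p ∈ (c, l) :: L, b + 1 ≤ p.1 := by
          have hpw : List.IsChain (fun p q : ℕ × ℕ => p.1 ≤ q.1) ((c, l) :: L) :=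
            hc'.imp fun _ _ h => h.1
          intro p hp
          rcases List.mem_cons.1 hp with rfl | hp
          · exact hlt
          · exact hlt.trans_le (List.rel_of_pairwise_cons (List.isChain_iff_pairwise.1 hpw) hp)
        have hhalf : n' + 1 =
            2 * (((c, l) :: L).map fun p => p.2 * 2 ^ (p.1 - (b + 1))).sum := by
          rw [← hsum, ← List.sum_map_mul_left]
          refine congrArg List.sum (List.map_congr_left fun p hp => ?_)
          rw [show p.1 - b = p.1 - (b + 1) + 1 by have := hge p hp; omega, pow_succ]
          ring
        have hodd : Nat.beq (n' % 2) 1 = true := by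
          rw [Nat.beq_eq]; omega
        rw [hodd, cond_true]
        obtain _ | a := a
        · simp at hn
        refine ih (a := a) (by rw [pow_succ] at hn; omega) (by omega) hS ?_ (by omega) hk
        refine List.isChain_cons_cons.2 ⟨⟨hlt, fun _ => ?_⟩, hc'⟩
        simp only [Finset.mem_insert, Finset.mem_singleton] at hl
        change l < 20
        omega
      · right
        simp only [List.map_cons, List.sum_cons, Nat.sub_self, pow_zero, mul_one] at hsum
        obtain _ | k := k
        · simp at hk
        simp only [List.length_cons, Nat.add_le_add_iff_right] at hk
        have hlm' := hlm rfl
        refine List.mem_flatMap.2 ⟨l, by simpa using hl, ?_⟩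
        have hcond : (Nat.ble (l + 1) m && Nat.ble l (n' + 1)) = true := by
          rw [Bool.and_eq_true, Nat.ble_eq, Nat.ble_eq]
          omega
        rw [hcond, cond_true]
        exact List.mem_map_of_mem
          (ih (a := a) (by omega) (by omega) hS' hc' (by omega) hk)

theorem completions_eq :
    completions 48 (3 * 2 ^ 33 - 8) 12 0 20 =
      [[(3, 19), (5, 3), (8, 19), (10, 3), (13, 19), (15, 3), (18, 19), (20, 3),
        (23, 19), (25, 3), (28, 19), (30, 19)]] := by
  decide +kernel

theorem IsTiling.eq_of_length_le {L : List (ℕ × ℕ)}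
    (hL : IsTiling {1, 3, 9, 19} (3 * 2 ^ 33 - 8) L) (hk : L.length ≤ 12) :
    L = [(3, 19), (5, 3), (8, 19), (10, 3), (13, 19), (15, 3), (18, 19), (20, 3),
      (23, 19), (25, 3), (28, 19), (30, 19)] := by
  obtain ⟨hS, hc, hsum⟩ := hL
  rw [← List.mem_singleton, ← completions_eq]
  refine mem_completions (a := 35) (by norm_num) (by norm_num) hS ?_ hsum hk
  refine List.isChain_cons.2 ⟨fun p hp => ⟨Nat.zero_le _, fun _ => ?_⟩, hc⟩
  have := hS p (List.mem_of_mem_head? hp)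
  simp only [Finset.mem_insert, Finset.mem_singleton] at this
  change p.2 < 20
  omega

theorem isTiling_twelve :
    IsTiling {1, 3, 9, 19} (3 * 2 ^ 33 - 8)
      [(3, 19), (5, 3), (8, 19), (10, 3), (13, 19), (15, 3), (18, 19), (20, 3),
        (23, 19), (25, 3), (28, 19), (30, 19)] := by
  refine ⟨by simp, ?_, by norm_num⟩
  change List.IsChain _ _
  simp

theorem stmt14 :
    (3 * 2 ^ 33 - 8 : ℕ) = 19 * 2 ^ 30 + 19 * 2 ^ 28 + 3 * 2 ^ 25 + 19 * 2 ^ 23 +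
      3 * 2 ^ 20 + 19 * 2 ^ 18 + 3 * 2 ^ 15 + 19 * 2 ^ 13 + 3 * 2 ^ 10 +
      19 * 2 ^ 8 + 3 * 2 ^ 5 + 19 * 2 ^ 3 ∧
    stilde {1, 3, 9, 19} (3 * 2 ^ 33 - 8) = 12 ∧
    Ktilde {1, 3, 9, 19} (3 * 2 ^ 33 - 8) =
      {[(3, 19), (5, 3), (8, 19), (10, 3), (13, 19), (15, 3), (18, 19), (20, 3),
        (23, 19), (25, 3), (28, 19), (30, 19)]} := by
  have hmin : stilde {1, 3, 9, 19} (3 * 2 ^ 33 - 8) = 12 := by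
    refine le_antisymm (sInf_le ⟨_, isTiling_twelve, rfl⟩) (le_sInf ?_)
    rintro _ ⟨L, hL, rfl⟩
    by_contra! hlt
    have hlt' : L.length < 12 := by exact_mod_cast hlt
    rw [hL.eq_of_length_le hlt'.le] at hlt'
    simp at hlt'
  refine ⟨by norm_num, hmin, Set.ext fun L => ?_⟩
  rw [Ktilde, Set.mem_ofPred_eq, hmin, Set.mem_singleton_iff]
  constructor
  · rintro ⟨hL, hlen⟩
    have hlen' : L.length = 12 := by exact_mod_cast hlen
    exact hL.eq_of_length_le hlen'.le
  · rintro rfl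
    exact ⟨isTiling_twelve, rfl⟩
end

section
/- Let S = {1,9,19} and r = 3·2^{43}−8. Then s̃(r,S) = 17, and K̃(r,S) consists exactly of the 32 sequences obtained as follows: for each k ∈ {1,2,3,4,5} choose B_k to be either the block (7k−4,19),(7k−2,19),(7k+1,1) or the block (7k−4,19),(7k−2,9),(7k−1,9), and form the concatenation B_1,B_2,B_3,B_4,B_5 followed by the two final pairs (38,19),(40,19). -/
open scoped BigOperators

/-- The two possible blocks for each `k ∈ {1,…,5}`:
`true` gives `(7k−4,19),(7k−2,19),(7k+1,1)` and
`false` gives `(7k−4,19),(7k−2,9),(7k−1,9)`. -/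
def blockChoice (k : ℕ) (c : Bool) : List (ℕ × ℕ) :=
  if c then [(7 * k - 4, 19), (7 * k - 2, 19), (7 * k + 1, 1)]
  else [(7 * k - 4, 19), (7 * k - 2, 9), (7 * k - 1, 9)]

/-- The weight of a list of placed tiles. -/
def tileSum (L : List (ℕ × ℕ)) : ℕ := (L.map fun p => p.2 * 2 ^ p.1).sum

/-- Sorted lists of placed tiles from `{1, 9, 19}`, all placed at positions at least `b`. -/
def IsSortedFrom (b : ℕ) (L : List (ℕ × ℕ)) : Prop :=
  (∀ p ∈ L, p.2 ∈ ({1, 9, 19} : Finset ℕ) ∧ b ≤ p.1) ∧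
  L.Pairwise (fun p q => p.1 ≤ q.1 ∧ (p.1 = q.1 → q.2 < p.2))

/-- The tiles of `T`, all placed at position `b`. -/
def placeAt (b : ℕ) (T : List ℕ) : List (ℕ × ℕ) := T.map fun l => (b, l)

/-- The possible sets of tiles at a single position. -/
def tileSets : List (List ℕ) := [19, 9, 1].sublists

/-- A potential on deficits `d`: passing from `d` to `(d + t) / 2` by placing tiles of total
weight `t` lowers it by at least `3` minus `7` times the number of tiles placed. -/
def potential (d : ℕ) : ℕ :=
  [0, 1, 4, 0, 7, 2, 3, 6, 10, 5, 5, 2, 6, 9, 9, 6, 13, 5, 8, 5, 8, 4, 5, 9, 9, 5, 12, 5,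
    12].getD d 0

lemma potential_step : ∀ T ∈ tileSets, ∀ d < 29, 1 ≤ d → (T.sum + d) % 2 = 0 →
    potential ((T.sum + d) / 2) + 3 ≤ potential d + 7 * T.length ∧
      1 ≤ (T.sum + d) / 2 ∧ (T.sum + d) / 2 < 29 := by
  decide +kernel

lemma tileSum_append (L M : List (ℕ × ℕ)) : tileSum (L ++ M) = tileSum L + tileSum M := by
  simp [tileSum]

lemma tileSum_placeAt (b : ℕ) (T : List ℕ) : tileSum (placeAt b T) = T.sum * 2 ^ b := by
  induction T with
  | nil => simp [tileSum, placeAt]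
  | cons a T ih =>
    simp only [tileSum, placeAt, List.map_cons, List.sum_cons] at ih ⊢
    rw [ih]; ring

lemma IsSortedFrom.two_pow_dvd {b : ℕ} {L : List (ℕ × ℕ)} (h : IsSortedFrom b L) :
    2 ^ b ∣ tileSum L := by
  refine List.dvd_sum fun x hx => ?_
  obtain ⟨p, hp, rfl⟩ := List.mem_map.1 hx
  exact (pow_dvd_pow 2 (h.1 p hp).2).mul_left _

lemma mem_tileSets_of_pairwise {T : List ℕ} (hT : T.Pairwise (· > ·))
    (hS : ∀ l ∈ T, l ∈ ({1, 9, 19} : Finset ℕ)) : T ∈ tileSets := by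
  have hsub : T.Subperm [19, 9, 1] := by
    refine List.subperm_of_subset (hT.imp fun h => ne_of_gt h) fun l hl => ?_
    have := hS l hl
    simp only [Finset.mem_insert, Finset.mem_singleton] at this
    simp only [List.mem_cons, List.not_mem_nil, or_false]
    tauto
  rw [tileSets, List.mem_sublists]
  exact List.sublist_of_subperm_of_pairwise hsub hT (by decide)

lemma IsSortedFrom.exists_placeAt_append {b : ℕ} {L : List (ℕ × ℕ)} (h : IsSortedFrom b L) :
    ∃ T ∈ tileSets, ∃ M, L = placeAt b T ++ M ∧ IsSortedFrom (b + 1) M := by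
  suffices H : ∃ T : List ℕ, T.Pairwise (· > ·) ∧ ∃ M, L = placeAt b T ++ M ∧
      IsSortedFrom (b + 1) M by
    obtain ⟨T, hT, M, rfl, hM⟩ := H
    refine ⟨T, mem_tileSets_of_pairwise hT fun l hl => ?_, M, rfl, hM⟩
    exact (h.1 (b, l) (List.mem_append_left _ (List.mem_map.2 ⟨l, hl, rfl⟩))).1
  induction L with
  | nil => exact ⟨[], List.Pairwise.nil, [], rfl, by simp, List.Pairwise.nil⟩
  | cons p L ih =>
    obtain ⟨hmem, hpair⟩ := h
    have hp := hmem p List.mem_cons_self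
    obtain ⟨hpL, hL⟩ := List.pairwise_cons.1 hpair
    rcases hp.2.eq_or_lt with hb | hb
    · obtain ⟨T, hT, M, rfl, hM⟩ := ih ⟨fun q hq => hmem q (List.mem_cons_of_mem _ hq), hL⟩
      refine ⟨p.2 :: T, List.pairwise_cons.2 ⟨fun l hl => ?_, hT⟩, M, ?_, hM⟩
      · exact (hpL (b, l) (List.mem_append_left _ (List.mem_map.2 ⟨l, hl, rfl⟩))).2 hb.symm
      · simp [placeAt, hb]
    · refine ⟨[], List.Pairwise.nil, p :: L, rfl, fun q hq => ⟨(hmem q hq).1, ?_⟩, hpair⟩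
      rcases List.mem_cons.1 hq with rfl | hq
      · exact hb
      · exact le_trans hb (hpL q hq).1

/-- Removing the tiles at the lowest position halves the (updated) deficit. -/
lemma IsSortedFrom.exists_step {b k d : ℕ} {L : List (ℕ × ℕ)} (h : IsSortedFrom b L)
    (hsum : tileSum L + d * 2 ^ b = 3 * 2 ^ (b + (k + 1))) :
    ∃ T ∈ tileSets, ∃ M, L = placeAt b T ++ M ∧ IsSortedFrom (b + 1) M ∧
      (T.sum + d) % 2 = 0 ∧
      tileSum M + (T.sum + d) / 2 * 2 ^ (b + 1) = 3 * 2 ^ (b + 1 + k) := by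
  obtain ⟨T, hT, M, rfl, hM⟩ := h.exists_placeAt_append
  refine ⟨T, hT, M, rfl, hM, ?_⟩
  obtain ⟨c, hc⟩ := hM.two_pow_dvd
  rw [tileSum_append, tileSum_placeAt, hc] at hsum
  have hcancel : T.sum + d + 2 * c = 2 * (3 * 2 ^ k) :=
    Nat.eq_of_mul_eq_mul_left (pow_pos two_pos b) (by rw [pow_succ, pow_add, pow_succ] at hsum; linarith)
  have heven : (T.sum + d) % 2 = 0 := by omega
  have hhalf : c + (T.sum + d) / 2 = 3 * 2 ^ k := by omega
  refine ⟨heven, ?_⟩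
  rw [hc, mul_comm (2 ^ (b + 1)) c, ← add_mul, hhalf, pow_add 2 (b + 1) k]
  ring

lemma IsSortedFrom.three_mul_le {k b d : ℕ} {L : List (ℕ × ℕ)} (h : IsSortedFrom b L)
    (hd : 1 ≤ d) (hd' : d < 29) (hsum : tileSum L + d * 2 ^ b = 3 * 2 ^ (b + k)) :
    3 * k ≤ 7 * L.length + potential d := by
  induction k generalizing b d L with
  | zero => simp
  | succ k ih =>
    obtain ⟨T, hT, M, rfl, hM, heven, hsum'⟩ := h.exists_step hsum
    obtain ⟨hpot, hlo, hhi⟩ := potential_step T hT d hd' hd heven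
    have := ih hM hlo hhi hsum'
    simp only [placeAt, List.length_append, List.length_map]
    omega

/-- All ways of following, for `k` positions from `b` on, steps that attain equality in
`potential_step`, starting from the deficit `d` and ending with the deficit `3`. -/
def tightLists : ℕ → ℕ → ℕ → List (List (ℕ × ℕ))
  | 0, _, d => if d = 3 then [[]] else []
  | k + 1, b, d =>
    (tileSets.filter fun T => (T.sum + d) % 2 = 0 ∧
      potential ((T.sum + d) / 2) + 3 = potential d + 7 * T.length).flatMap fun T =>
        (tightLists k (b + 1) ((T.sum + d) / 2)).map (placeAt b T ++ ·)

lemma IsSortedFrom.mem_tightLists {k b d : ℕ} {L : List (ℕ × ℕ)} (h : IsSortedFrom b L)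
    (hd : 1 ≤ d) (hd' : d < 29) (hsum : tileSum L + d * 2 ^ b = 3 * 2 ^ (b + k))
    (htight : 7 * L.length + potential d = 3 * k) : L ∈ tightLists k b d := by
  induction k generalizing b d L with
  | zero =>
    obtain rfl : L = [] := List.eq_nil_of_length_eq_zero (by omega)
    have : d = 3 := Nat.eq_of_mul_eq_mul_right (pow_pos two_pos b) (by simpa [tileSum] using hsum)
    simp [tightLists, this]
  | succ k ih =>
    obtain ⟨T, hT, M, rfl, hM, heven, hsum'⟩ := h.exists_step hsum
    obtain ⟨hpot, hlo, hhi⟩ := potential_step T hT d hd' hd heven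
    have hle := hM.three_mul_le hlo hhi hsum'
    simp only [placeAt, List.length_append, List.length_map] at htight
    have hmem := ih hM hlo hhi hsum' (by omega)
    simp only [tightLists, List.mem_flatMap, List.mem_filter, List.mem_map, decide_eq_true_eq]
    exact ⟨T, ⟨hT, heven, by omega⟩, M, hmem, rfl⟩

lemma IsTiling.isSortedFrom {r : ℕ} {L : List (ℕ × ℕ)} (h : IsTiling {1, 9, 19} r L) :
    IsSortedFrom 0 L := by
  refine ⟨fun p hp => ⟨h.1 p hp, Nat.zero_le _⟩, ?_⟩
  have : IsTrans (ℕ × ℕ) (fun p q => p.1 ≤ q.1 ∧ (p.1 = q.1 → q.2 < p.2)) :=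
    ⟨fun p q s hpq hqs => ⟨hpq.1.trans hqs.1, fun hps => by
      have h₁ := hpq.2 (by omega)
      have h₂ := hqs.2 (by omega)
      omega⟩⟩
  exact List.isChain_iff_pairwise.1 h.2.1

/-- The tiling built from the choices `f` of the five blocks. -/
def blockTiling (f : Fin 5 → Bool) : List (ℕ × ℕ) :=
  (List.ofFn fun i : Fin 5 => blockChoice ((i : ℕ) + 1) (f i)).flatten ++ [(38, 19), (40, 19)]

lemma exists_eq_blockTiling_of_mem_tightLists :
    ∀ L ∈ tightLists 43 0 8, ∃ f : Fin 5 → Bool, L = blockTiling f := by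
  decide +kernel

lemma isTiling_blockTiling (f : Fin 5 → Bool) :
    IsTiling {1, 9, 19} (3 * 2 ^ 43 - 8) (blockTiling f) := by
  revert f
  unfold IsTiling List.Chain'
  decide +kernel

lemma length_blockTiling : ∀ f : Fin 5 → Bool, (blockTiling f).length = 17 := by
  decide +kernel

theorem stmt15 :
    stilde {1, 9, 19} (3 * 2 ^ 43 - 8) = 17 ∧
    Ktilde {1, 9, 19} (3 * 2 ^ 43 - 8) =
      {L | ∃ f : Fin 5 → Bool,
        L = (List.ofFn fun i : Fin 5 => blockChoice ((i : ℕ) + 1) (f i)).flatten ++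
          [(38, 19), (40, 19)]} := by
  have hsum : ∀ {L}, IsTiling {1, 9, 19} (3 * 2 ^ 43 - 8) L →
      tileSum L + 8 * 2 ^ 0 = 3 * 2 ^ (0 + 43) := fun {L} hL => by
    rw [show tileSum L = 3 * 2 ^ 43 - 8 from hL.2.2]
    norm_num
  have hpot : potential 8 = 10 := rfl
  have hmin : stilde {1, 9, 19} (3 * 2 ^ 43 - 8) = 17 := by
    refine le_antisymm (sInf_le ⟨blockTiling fun _ => true, isTiling_blockTiling _, ?_⟩)
      (le_sInf ?_)
    · rw [length_blockTiling]; rfl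
    · rintro _ ⟨L, hL, rfl⟩
      have := hL.isSortedFrom.three_mul_le (by norm_num) (by norm_num) (hsum hL)
      exact_mod_cast (by omega : 17 ≤ L.length)
  refine ⟨hmin, Set.ext fun L => ⟨fun ⟨hL, hlen⟩ => ?_, ?_⟩⟩
  · rw [hmin] at hlen
    have hlen : L.length = 17 := by exact_mod_cast hlen
    exact exists_eq_blockTiling_of_mem_tightLists L
      (hL.isSortedFrom.mem_tightLists (by norm_num) (by norm_num) (hsum hL) (by omega))
  · rintro ⟨f, rfl⟩
    refine ⟨isTiling_blockTiling f, ?_⟩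
    rw [hmin]
    exact congrArg Nat.cast (length_blockTiling f)
end

section
/- Let F be an algebraically closed field of characteristic 2, let c_1, c_3 ∈ F, and let a ∈ F with a ≠ 0. Then the set of t_0 ∈ F satisfying a^{36}·t_0^{6} + a^{24}·t_0^{4} + a^{12}·t_0^{2} + a^{84}·t_0 + a^{1092} + c_3^{8}·a^{324} + a^{312} + a^{156} + c_1^{4}·a^{132} + c_3^{2}·a^{120} + a^{117} + c_3·a^{84} + 1 = 0 has exactly 6 elements. -/
open Polynomial in
/-- In characteristic 2, a sextic whose only odd-degree term is a nonzero linear one has constant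
nonzero derivative, hence six distinct roots in an algebraically closed field. -/
theorem ncard_roots_sextic_of_char_two {F : Type*} [Field F] [IsAlgClosed F] [CharP F 2]
    {a6 a4 a2 a1 a0 : F} (h6 : a6 ≠ 0) (h1 : a1 ≠ 0) :
    {t : F | a6 * t ^ 6 + a4 * t ^ 4 + a2 * t ^ 2 + a1 * t + a0 = 0}.ncard = 6 := by
  set p : F[X] := C a6 * X ^ 6 + C a4 * X ^ 4 + C a2 * X ^ 2 + C a1 * X + C a0 with hp
  have hdeg : p.natDegree = 6 := by rw [hp]; compute_degree!
  have hp0 : p ≠ 0 := by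
    intro h
    simp [h] at hdeg
  have h2 : (2 : F[X]) = 0 := CharTwo.two_eq_zero
  have hder : derivative p = C a1 := by
    simp only [hp, derivative_add, derivative_mul, derivative_C, derivative_X_pow, derivative_X]
    push_cast
    simp only [map_ofNat]
    linear_combination (3 * C a6 * X ^ 5 + 2 * C a4 * X ^ 3 + C a2 * X) * h2
  have hsep : p.Separable := by
    rw [Polynomial.Separable, hder]
    exact ⟨0, C a1⁻¹, by rw [zero_mul, zero_add, ← C_mul, inv_mul_cancel₀ h1, C_1]⟩
  have hset : {t : F | a6 * t ^ 6 + a4 * t ^ 4 + a2 * t ^ 2 + a1 * t + a0 = 0} = p.rootSet F := by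
    ext t
    rw [mem_rootSet, Set.mem_ofPred_eq]
    have haeval : aeval t p = a6 * t ^ 6 + a4 * t ^ 4 + a2 * t ^ 2 + a1 * t + a0 := by
      simp [hp]
    simp [hp0, haeval]
  rw [hset, ← Nat.card_coe_set_eq, Nat.card_eq_fintype_card,
    card_rootSet_eq_natDegree hsep (IsAlgClosed.splits _), hdeg]

theorem stmt17 (F : Type*) [Field F] [IsAlgClosed F] [CharP F 2]
    (c1 c3 a : F) (ha : a ≠ 0) :
    {t0 : F | a ^ 36 * t0 ^ 6 + a ^ 24 * t0 ^ 4 + a ^ 12 * t0 ^ 2 + a ^ 84 * t0 +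
      a ^ 1092 + c3 ^ 8 * a ^ 324 + a ^ 312 + a ^ 156 + c1 ^ 4 * a ^ 132 +
      c3 ^ 2 * a ^ 120 + a ^ 117 + c3 * a ^ 84 + 1 = 0}.ncard = 6 := by
  have h := ncard_roots_sextic_of_char_two (a4 := a ^ 24) (a2 := a ^ 12)
    (a0 := a ^ 1092 + c3 ^ 8 * a ^ 324 + a ^ 312 + a ^ 156 + c1 ^ 4 * a ^ 132 +
      c3 ^ 2 * a ^ 120 + a ^ 117 + c3 * a ^ 84 + 1) (pow_ne_zero 36 ha) (pow_ne_zero 84 ha)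
  simpa only [← add_assoc] using h
end

section
/- Let F be an algebraically closed field of characteristic 2 and let c_1, c_3 ∈ F. Then the set of triples (a, t_0, x_0) ∈ F^3 with a ≠ 0 satisfying simultaneously the three equations (i) a^{4096} + c_3^{32}·a^{1024} + c_1^{16}·a^{256} + c_3^{16}·a^{64} + c_1^{4}·a^{16} + c_3^{2}·a^{4} + a = 0, (ii) a^{36}·t_0^{6} + a^{24}·t_0^{4} + a^{12}·t_0^{2} + a^{84}·t_0 + a^{1092} + c_3^{8}·a^{324} + a^{312} + a^{156} + c_1^{4}·a^{132} + c_3^{2}·a^{120} + a^{117} + c_3·a^{84} + 1 = 0, and (iii) a^{576} + a^{264} + c_3^{4}·a^{192} + (x_0^{4} + x_0)·a^{160} + a^{108} + t_0^{8} = 0, is a finite set with exactly 4095·6·4 = 98280 elements. -/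
open Polynomial

/-- A polynomial over an algebraically closed field whose derivative is a nonzero constant
has as many distinct roots as its degree. -/
theorem encard_zeros_of_derivative_eq_C {F : Type*} [Field F] [IsAlgClosed F] {p : F[X]} {u : F}
    (hu : u ≠ 0) (hp : derivative p = C u) : {x | p.eval x = 0}.encard = p.natDegree := by
  classical
  have hp0 : p ≠ 0 := by
    rintro rfl
    exact hu (C_eq_zero.1 (by simpa using hp.symm))
  have hsep : p.Separable := by
    rw [separable_def, hp]
    exact ⟨0, C u⁻¹, by rw [zero_mul, zero_add, ← C_mul, inv_mul_cancel₀ hu, C_1]⟩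
  have hset : {x | p.eval x = 0} = (p.roots.toFinset : Set F) := by
    ext x
    simp [hp0]
  rw [hset, Set.encard_coe_eq_coe_finsetCard, Multiset.toFinset_card_of_nodup (nodup_roots hsep),
    (IsAlgClosed.splits p).natDegree_eq_card_roots]

/-- If a set has `m` elements and every fibre over it has `n` elements, the total space has
`m * n` elements. -/
theorem encard_setOf_fst_mem_and {α β : Type*} {s : Set α} {r : α → β → Prop} {m n : ℕ}
    (hs : s.encard = m) (hr : ∀ a ∈ s, {b | r a b}.encard = n) :
    {q : α × β | q.1 ∈ s ∧ r q.1 q.2}.encard = (m * n : ℕ) := by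
  classical
  lift s to Finset α using Set.finite_of_encard_eq_coe hs
  have hfin : ∀ a : s, {b | r a b}.Finite := fun a => Set.finite_of_encard_eq_coe (hr a a.2)
  have hcard : ∀ a : s, (hfin a).toFinset.card = n := fun a => by
    have := hr a a.2
    rw [(hfin a).encard_eq_coe_toFinset_card] at this
    exact_mod_cast this
  have himage : {q : α × β | q.1 ∈ (s : Set α) ∧ r q.1 q.2} =
      (fun x : (_ : s) × β => ((x.1 : α), x.2)) ''
        (s.attach.sigma fun a => (hfin a).toFinset : Finset ((_ : s) × β)) := by
    ext ⟨a, b⟩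
    simp [and_comm]
  have hinj : Function.Injective (fun x : (_ : s) × β => ((x.1 : α), x.2)) := by
    rintro ⟨⟨a, ha⟩, b⟩ ⟨⟨a', ha'⟩, b'⟩ h
    simp_all
  rw [Set.encard_coe_eq_coe_finsetCard, Nat.cast_inj] at hs
  rw [himage, hinj.encard_image, Set.encard_coe_eq_coe_finsetCard, Finset.card_sigma]
  simp [hcard, hs]

theorem derivative_X_pow_of_two_dvd {R : Type*} [CommSemiring R] [CharP R 2] {n : ℕ} (hn : 2 ∣ n) :
    derivative (X ^ n : R[X]) = 0 := by
  rw [derivative_X_pow, (CharP.cast_eq_zero_iff R 2 n).2 hn, C_0, zero_mul]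

section CharTwo

variable {F : Type*} [Field F] [IsAlgClosed F] [CharP F 2]

theorem encard_nonzero_zeros_additive (c₁ c₂ c₃ c₄ c₅ : F) :
    {a : F | a ≠ 0 ∧ a ^ 4096 + c₁ * a ^ 1024 + c₂ * a ^ 256 + c₃ * a ^ 64 + c₄ * a ^ 16 +
      c₅ * a ^ 4 + a = 0}.encard = (4095 : ℕ) := by
  set p : F[X] := X ^ 4096 + C c₁ * X ^ 1024 + C c₂ * X ^ 256 + C c₃ * X ^ 64 + C c₄ * X ^ 16 +
    C c₅ * X ^ 4 + X with hp
  have hdeg : p.natDegree = 4096 := by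
    rw [hp]
    compute_degree!
  have hder : derivative p = C 1 := by
    rw [hp]
    simp only [derivative_add, derivative_C_mul, derivative_X_pow_of_two_dvd, derivative_X,
      Nat.reduceDvd, mul_zero, add_zero, zero_add, C_1]
  have hset : {a : F | a ≠ 0 ∧ a ^ 4096 + c₁ * a ^ 1024 + c₂ * a ^ 256 + c₃ * a ^ 64 +
      c₄ * a ^ 16 + c₅ * a ^ 4 + a = 0} = {a | p.eval a = 0} \ {0} := by
    ext a
    simp [hp, and_comm]
  have hzero : (0 : F) ∈ {a | p.eval a = 0} := by simp [hp]
  rw [hset, Set.encard_sdiff_singleton_of_mem hzero,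
    encard_zeros_of_derivative_eq_C one_ne_zero hder, hdeg]
  rfl

theorem encard_zeros_sextic {u v w z : F} (k : F) (hu : u ≠ 0) (hz : z ≠ 0) :
    {t : F | u * t ^ 6 + v * t ^ 4 + w * t ^ 2 + z * t + k = 0}.encard = (6 : ℕ) := by
  have hder : derivative (C u * X ^ 6 + C v * X ^ 4 + C w * X ^ 2 + C z * X + C k) = C z := by
    simp only [derivative_add, derivative_C_mul, derivative_X_pow_of_two_dvd, derivative_X,
      derivative_C, Nat.reduceDvd, mul_zero, mul_one, add_zero, zero_add]
  have hdeg : (C u * X ^ 6 + C v * X ^ 4 + C w * X ^ 2 + C z * X + C k).natDegree = 6 := by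
    compute_degree!
  simpa [hdeg] using encard_zeros_of_derivative_eq_C hz hder

theorem encard_zeros_quartic (k : F) : {x : F | x ^ 4 + x + k = 0}.encard = (4 : ℕ) := by
  have hder : derivative (X ^ 4 + X + C k) = C 1 := by
    simp only [derivative_add, derivative_X_pow_of_two_dvd, derivative_X, derivative_C,
      Nat.reduceDvd, add_zero, zero_add, C_1]
  have hdeg : (X ^ 4 + X + C k).natDegree = 4 := by
    compute_degree!
  simpa [hdeg] using encard_zeros_of_derivative_eq_C one_ne_zero hder

end CharTwo

theorem stmt19 (F : Type*) [Field F] [IsAlgClosed F] [CharP F 2] (c1 c3 : F) :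
    {q : F × F × F | q.1 ≠ 0 ∧
      q.1 ^ 4096 + c3 ^ 32 * q.1 ^ 1024 + c1 ^ 16 * q.1 ^ 256 + c3 ^ 16 * q.1 ^ 64 +
        c1 ^ 4 * q.1 ^ 16 + c3 ^ 2 * q.1 ^ 4 + q.1 = 0 ∧
      q.1 ^ 36 * q.2.1 ^ 6 + q.1 ^ 24 * q.2.1 ^ 4 + q.1 ^ 12 * q.2.1 ^ 2 +
        q.1 ^ 84 * q.2.1 + q.1 ^ 1092 + c3 ^ 8 * q.1 ^ 324 + q.1 ^ 312 + q.1 ^ 156 +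
        c1 ^ 4 * q.1 ^ 132 + c3 ^ 2 * q.1 ^ 120 + q.1 ^ 117 + c3 * q.1 ^ 84 + 1 = 0 ∧
      q.1 ^ 576 + q.1 ^ 264 + c3 ^ 4 * q.1 ^ 192 + (q.2.2 ^ 4 + q.2.2) * q.1 ^ 160 +
        q.1 ^ 108 + q.2.1 ^ 8 = 0}.Finite ∧
    {q : F × F × F | q.1 ≠ 0 ∧
      q.1 ^ 4096 + c3 ^ 32 * q.1 ^ 1024 + c1 ^ 16 * q.1 ^ 256 + c3 ^ 16 * q.1 ^ 64 +
        c1 ^ 4 * q.1 ^ 16 + c3 ^ 2 * q.1 ^ 4 + q.1 = 0 ∧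
      q.1 ^ 36 * q.2.1 ^ 6 + q.1 ^ 24 * q.2.1 ^ 4 + q.1 ^ 12 * q.2.1 ^ 2 +
        q.1 ^ 84 * q.2.1 + q.1 ^ 1092 + c3 ^ 8 * q.1 ^ 324 + q.1 ^ 312 + q.1 ^ 156 +
        c1 ^ 4 * q.1 ^ 132 + c3 ^ 2 * q.1 ^ 120 + q.1 ^ 117 + c3 * q.1 ^ 84 + 1 = 0 ∧
      q.1 ^ 576 + q.1 ^ 264 + c3 ^ 4 * q.1 ^ 192 + (q.2.2 ^ 4 + q.2.2) * q.1 ^ 160 +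
        q.1 ^ 108 + q.2.1 ^ 8 = 0}.ncard = 98280 := by
  have key := encard_setOf_fst_mem_and
    (encard_nonzero_zeros_additive (c3 ^ 32) (c1 ^ 16) (c3 ^ 16) (c1 ^ 4) (c3 ^ 2))
    (r := fun a (y : F × F) =>
      y.1 ∈ {t | a ^ 36 * t ^ 6 + a ^ 24 * t ^ 4 + a ^ 12 * t ^ 2 + a ^ 84 * t +
        (a ^ 1092 + c3 ^ 8 * a ^ 324 + a ^ 312 + a ^ 156 + c1 ^ 4 * a ^ 132 + c3 ^ 2 * a ^ 120 +
          a ^ 117 + c3 * a ^ 84 + 1) = 0} ∧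
      a ^ 576 + a ^ 264 + c3 ^ 4 * a ^ 192 + (y.2 ^ 4 + y.2) * a ^ 160 + a ^ 108 + y.1 ^ 8 = 0)
    (n := 6 * 4) (by
      rintro a ⟨ha, -⟩
      refine encard_setOf_fst_mem_and
        (encard_zeros_sextic _ (pow_ne_zero _ ha) (pow_ne_zero _ ha))
        (r := fun t x => a ^ 576 + a ^ 264 + c3 ^ 4 * a ^ 192 + (x ^ 4 + x) * a ^ 160 +
          a ^ 108 + t ^ 8 = 0) fun t _ => ?_
      rw [← encard_zeros_quartic
        ((a ^ 576 + a ^ 264 + c3 ^ 4 * a ^ 192 + a ^ 108 + t ^ 8) / a ^ 160)]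
      congr 1
      ext x
      have ha' : a ^ 160 ≠ 0 := pow_ne_zero _ ha
      rw [Set.mem_ofPred_eq, Set.mem_ofPred_eq, add_div_eq_mul_add_div _ _ ha', div_eq_zero_iff,
        or_iff_left ha']
      constructor <;> intro h <;> linear_combination h)
  simp only [Set.mem_ofPred_eq, and_assoc, ← add_assoc] at key
  exact ⟨Set.finite_of_encard_eq_coe key, by rw [Set.ncard_def, key]; rfl⟩
end
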